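/- arXiv:1911.10577 — 4 statements merged into one kernel-verified Lean document; each statement's English description precedes it below -/
import Mathlib

section
/- Let R ⊆ S be an integral FCP ring extension which is t-closed. Then the contraction map Spec(S) → Spec(R), Q ↦ Q ∩ R, is bijective. -/
/-!
Surjectivity is lying over. For injectivity, let `C` be the conductor of `R` in `S`, the largest
ideal of `S` contained in (the image of) `R`. Applying t-closedness with `r = 0` to multiples of
`s` with `s² ∈ C` shows that `C` is a radical ideal of `S`.

Fix a prime `P` of `R`. The subalgebras `R + PⁿS` form a descending chain, so `R + PⁿS = R + Pⁿ⁺¹S`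
for some `n`. Call this algebra `A`; then `A = R + PA`, and `A` is a finite `R`-module because it is
integral and, by the ascending chain condition, finitely generated as an algebra. Nakayama's lemma
gives `g ∈ R \ P` with `gA ⊆ R`, hence `g PⁿS ⊆ R`, and radicality of `C` upgrades this to `gP ⊆ C`
(`exists_notMem_mul_mem_conductor`).

Let now `Q₁, Q₂` lie over `P` and suppose `x ∈ Q₁ \ Q₂`. Stationarity of the chain `R + xⁿ⁺¹S` gives
`r ∈ R` and `s ∈ S` with `xⁿ⁺¹(1 - xs) = r`, and `r ∈ Q₁ ∩ R = P`. So `g xⁿ⁺¹(1 - xs) ∈ C`, and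
`g x(1 - xs) ∈ C` as `C` is radical. For `b = gxs` the elements `b² - gb` and `b³ - gb²` then lie in
`C ⊆ R`, so `b ∈ R` by t-closedness. Hence `b ∈ Q₁ ∩ R = P ⊆ Q₂`, and since `g, x ∉ Q₂` this forces
`s ∈ Q₂`. But `g x(1 - xs) ∈ C ∩ Q₁ ⊆ P ⊆ Q₂`, so `1 - xs ∈ Q₂` and `1 ∈ Q₂`,
which is absurd.
-/

/-- A maximal chain of length `n` from `T` to `U`: each step is a covering. -/
def IsMaxChainFromTo {α : Type*} [PartialOrder α] (T U : α) (n : ℕ)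
    (c : Fin (n + 1) → α) : Prop :=
  c 0 = T ∧ c (Fin.last n) = U ∧ ∀ i : Fin n, c i.castSucc ⋖ c i.succ

/-- The subextension determined by `T ≤ U` is catenarian: all maximal chains from
`T` to `U` have the same length. -/
def IsCatenarianFromTo {α : Type*} [PartialOrder α] (T U : α) : Prop :=
  ∀ (n m : ℕ) (c : Fin (n + 1) → α) (d : Fin (m + 1) → α),
    IsMaxChainFromTo T U n c → IsMaxChainFromTo T U m d → n = m

/-- The extension `R ⊆ S` has FCP: every chain of `R`-subalgebras of `S` is finite. -/
def IsFCPExt (R S : Type*) [CommRing R] [CommRing S] [Algebra R S] : Prop :=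
  ∀ C : Set (Subalgebra R S), IsChain (· ≤ ·) C → C.Finite

/-- The extension `R ⊆ S` is catenarian. -/
def IsCatenarianExt (R S : Type*) [CommRing R] [CommRing S] [Algebra R S] : Prop :=
  IsCatenarianFromTo (⊥ : Subalgebra R S) ⊤

/-- The length `ℓ[T,U]`: the supremum of lengths of chains from `T` to `U`. -/
noncomputable def extLength {α : Type*} [PartialOrder α] (T U : α) : ℕ :=
  sSup {n | ∃ c : Fin (n + 1) → α, StrictMono c ∧ c 0 = T ∧ c (Fin.last n) = U}

/-- The extension `R ⊆ S` is t-closed: `b² - rb ∈ R` and `b³ - rb² ∈ R` imply `b ∈ R`. -/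
def IsTClosedExt (R S : Type*) [CommRing R] [CommRing S] [Algebra R S] : Prop :=
  ∀ (b : S) (r : R),
    b ^ 2 - algebraMap R S r * b ∈ (algebraMap R S).range →
    b ^ 3 - algebraMap R S r * b ^ 2 ∈ (algebraMap R S).range →
    b ∈ (algebraMap R S).range

section

variable {R S : Type*} [CommRing R] [CommRing S] [Algebra R S]

/-- The subalgebra `R + I` of `S`, for an ideal `I` of `S`, as the preimage of the image of `R`
in `S ⧸ I`. -/
def subalgebraAddIdeal (R : Type*) {S : Type*} [CommRing R] [CommRing S] [Algebra R S]
    (I : Ideal S) : Subalgebra R S :=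
  (⊥ : Subalgebra R (S ⧸ I)).comap (Ideal.Quotient.mkₐ R I)

lemma mem_subalgebraAddIdeal {I : Ideal S} {s : S} :
    s ∈ subalgebraAddIdeal R I ↔ ∃ r : R, s - algebraMap R S r ∈ I := by
  simp only [subalgebraAddIdeal, Subalgebra.mem_comap, Algebra.mem_bot, Set.mem_range]
  refine exists_congr fun r => ?_
  rw [← Ideal.Quotient.eq, eq_comm]
  rfl

lemma subalgebraAddIdeal_mono {I J : Ideal S} (h : I ≤ J) :
    subalgebraAddIdeal R I ≤ subalgebraAddIdeal R J := by
  intro s hs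
  obtain ⟨r, hr⟩ := mem_subalgebraAddIdeal.1 hs
  exact mem_subalgebraAddIdeal.2 ⟨r, h hr⟩

lemma IsFCPExt.exists_eq_succ (h : IsFCPExt R S) (f : ℕ → Subalgebra R S) (hf : Antitone f) :
    ∃ n, f n = f (n + 1) := by
  by_contra! hne
  have hs : StrictAnti f := strictAnti_nat_of_succ_lt fun n =>
    lt_of_le_of_ne (hf n.le_succ) (hne n).symm
  have hfin : (Set.range f).Finite := h _ (by
    rintro _ ⟨a, rfl⟩ _ ⟨b, rfl⟩ -
    rcases le_total a b with hab | hab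
    · exact Or.inr (hf hab)
    · exact Or.inl (hf hab))
  exact Set.infinite_range_of_injective hs.injective hfin

lemma IsFCPExt.wellFoundedGT (h : IsFCPExt R S) : WellFoundedGT (Subalgebra R S) := by
  rw [wellFoundedGT_iff_monotone_chain_condition']
  intro a
  by_contra! hne
  have hfin : (Set.range a).Finite := h _ (by
    rintro _ ⟨i, rfl⟩ _ ⟨j, rfl⟩ -
    rcases le_total i j with hij | hij
    · exact Or.inl (a.monotone hij)
    · exact Or.inr (a.monotone hij))
  obtain ⟨_, ⟨n, rfl⟩, hn⟩ := hfin.exists_maximal (Set.range_nonempty a)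
  obtain ⟨m, -, hm⟩ := hne n
  exact hm.not_ge (hn ⟨m, rfl⟩ hm.le)

lemma IsFCPExt.fg (h : IsFCPExt R S) (A : Subalgebra R S) : A.FG := by
  have := h.wellFoundedGT
  obtain ⟨B, ⟨hBA, hB⟩, hmax⟩ := WellFounded.has_min (wellFounded_gt (α := Subalgebra R S))
    {B | B ≤ A ∧ B.FG} ⟨⊥, bot_le, Subalgebra.fg_bot⟩
  have hAB : A ≤ B := by
    intro a ha
    by_contra haB
    have hle : Algebra.adjoin R {a} ≤ A := Algebra.adjoin_le (by simpa using ha)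
    refine hmax (B ⊔ Algebra.adjoin R {a}) ⟨sup_le hBA hle, hB.sup ?_⟩ ?_
    · simpa using Subalgebra.fg_adjoin_finset (R := R) ({a} : Finset S)
    · refine lt_of_le_of_ne le_sup_left fun heq => haB ?_
      rw [heq]
      exact (le_sup_right : Algebra.adjoin R {a} ≤ _) (Algebra.self_mem_adjoin_singleton R a)
  exact le_antisymm hBA hAB ▸ hB

lemma IsFCPExt.toSubmodule_fg (h : IsFCPExt R S) [Algebra.IsIntegral R S] (A : Subalgebra R S) :
    (Subalgebra.toSubmodule A).FG := by
  have : Algebra.FiniteType R A := A.fg_iff_finiteType.1 (h.fg A)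
  have : Algebra.IsIntegral R A := Algebra.IsIntegral.of_injective A.val Subtype.val_injective
  have : Module.Finite R A := Algebra.IsIntegral.finite
  exact Module.Finite.iff_fg.1 (this : Module.Finite R (Subalgebra.toSubmodule A))

/-- The conductor of `R` in `S`, as an ideal of `S`. -/
def extConductor (R S : Type*) [CommRing R] [CommRing S] [Algebra R S] : Ideal S where
  carrier := {s | ∀ t : S, s * t ∈ (algebraMap R S).range}
  add_mem' {a b} ha hb t := by
    rw [add_mul]
    exact add_mem (ha t) (hb t)
  zero_mem' t := by
    rw [zero_mul]
    exact zero_mem _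
  smul_mem' c s hs t := by
    have := hs (c * t)
    rwa [smul_eq_mul, mul_comm c s, mul_assoc]

lemma mem_extConductor {s : S} :
    s ∈ extConductor R S ↔ ∀ t : S, s * t ∈ (algebraMap R S).range := Iff.rfl

lemma mem_range_of_mem_extConductor {s : S} (hs : s ∈ extConductor R S) :
    s ∈ (algebraMap R S).range := by
  simpa using hs 1

lemma IsTClosedExt.isRadical_extConductor (h : IsTClosedExt R S) :
    (extConductor R S).IsRadical := by
  refine (Ideal.isRadical_iff_pow_one_lt 2 one_lt_two).2 fun s hs t => h _ 0 ?_ ?_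
  · have := hs (t ^ 2)
    simpa [mul_pow] using this
  · have := hs (s * t ^ 3)
    convert this using 1
    simp only [map_zero]
    ring

/-- Modulo the conductor `C`, every prime `P` of `R` is killed by some `g ∉ P`: informally, `P`
is contained in `C` after localizing at `P`. -/
lemma exists_notMem_mul_mem_conductor (hFCP : IsFCPExt R S) [Algebra.IsIntegral R S]
    (htcl : IsTClosedExt R S) (P : Ideal R) [hP : P.IsPrime] :
    ∃ g ∉ P, ∀ p ∈ P, algebraMap R S (g * p) ∈ extConductor R S := by
  set I : Ideal S := P.map (algebraMap R S) with hI
  obtain ⟨n, hn⟩ := hFCP.exists_eq_succ (fun n => subalgebraAddIdeal R (I ^ n))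
    fun a b hab => subalgebraAddIdeal_mono (Ideal.pow_le_pow_right hab)
  set A := subalgebraAddIdeal R (I ^ n) with hA
  have hIA : ∀ y ∈ I ^ n, y ∈ A := fun y hy => mem_subalgebraAddIdeal.2 ⟨0, by simpa using hy⟩
  have hIP : ∀ y ∈ I ^ (n + 1), y ∈ P • Subalgebra.toSubmodule A := by
    intro y hy
    rw [pow_succ'] at hy
    refine Submodule.mul_induction_on hy (fun u hu v hv => ?_) fun _ _ => add_mem
    refine Submodule.span_induction (p := fun u _ => ∀ v ∈ I ^ n,
      u * v ∈ P • Subalgebra.toSubmodule A) ?_ ?_ ?_ ?_ hu v hv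
    · rintro _ ⟨p, hp, rfl⟩ v hv
      rw [← Algebra.smul_def]
      exact Submodule.smul_mem_smul hp (hIA v hv)
    · intro v _
      simp
    · intro a b _ _ ha hb v hv
      rw [add_mul]
      exact add_mem (ha v hv) (hb v hv)
    · intro c a _ ha v hv
      rw [smul_eq_mul, mul_comm c a, mul_assoc]
      exact ha _ (Ideal.mul_mem_left _ _ hv)
  have hle : Subalgebra.toSubmodule A ≤
      Subalgebra.toSubmodule (⊥ : Subalgebra R S) ⊔ P • Subalgebra.toSubmodule A := by
    intro a ha
    have ha' : a ∈ subalgebraAddIdeal R (I ^ (n + 1)) := hn ▸ (ha : a ∈ A)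
    obtain ⟨r, hr⟩ := mem_subalgebraAddIdeal.1 ha'
    exact Submodule.mem_sup.2 ⟨algebraMap R S r, Subalgebra.algebraMap_mem _ r, _, hIP _ hr,
      by ring⟩
  obtain ⟨g, hg, hgA⟩ := Submodule.exists_sub_one_mem_and_smul_le_of_fg_of_le_sup
    (hFCP.toSubmodule_fg A) le_rfl hle
  have hgP : g ∉ P := fun h => hP.ne_top <| (Ideal.eq_top_iff_one _).2 <| by
    simpa using sub_mem h hg
  refine ⟨g, hgP, fun p hp => htcl.isRadical_extConductor ⟨n + 1, fun t => ?_⟩⟩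
  -- `(gp)ⁿ⁺¹ t = g • y` with `y = gⁿ pⁿ⁺¹ t ∈ PⁿS`
  have hy : algebraMap R S p ^ n * (algebraMap R S (g ^ n * p) * t) ∈ A :=
    hIA _ (Ideal.mul_mem_right _ _ (Ideal.pow_mem_pow (Ideal.mem_map_of_mem _ hp) n))
  have := hgA (Submodule.smul_mem_pointwise_smul _ g _ hy)
  obtain ⟨r, hr⟩ := Algebra.mem_bot.1 (this : _ ∈ (⊥ : Subalgebra R S))
  refine ⟨r, hr.trans ?_⟩
  rw [Algebra.smul_def]
  simp only [map_mul, map_pow]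
  ring

/-- Half of injectivity; the other inclusion follows by symmetry. -/
lemma le_of_comap_eq (hFCP : IsFCPExt R S) [Algebra.IsIntegral R S]
    (htcl : IsTClosedExt R S) (Q₁ Q₂ : Ideal S) [h₁ : Q₁.IsPrime] [h₂ : Q₂.IsPrime]
    (h : Q₁.comap (algebraMap R S) = Q₂.comap (algebraMap R S)) : Q₁ ≤ Q₂ := by
  intro x hx
  by_contra hx₂
  -- elements of `R` lying in `Q₁` lie in `Q₂`
  have htrans : ∀ y ∈ (algebraMap R S).range, y ∈ Q₁ → y ∈ Q₂ := by
    rintro _ ⟨r, rfl⟩ hr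
    rw [← Ideal.mem_comap] at hr ⊢
    exact h ▸ hr
  obtain ⟨g, hg, hgP⟩ := exists_notMem_mul_mem_conductor hFCP htcl (Q₁.comap (algebraMap R S))
  have hg₂ : algebraMap R S g ∉ Q₂ := by rwa [h] at hg
  obtain ⟨n, hn⟩ := hFCP.exists_eq_succ
    (fun n => subalgebraAddIdeal R (Ideal.span {x ^ (n + 1)})) fun a b hab =>
      subalgebraAddIdeal_mono <| Ideal.span_singleton_le_span_singleton.2 <|
        pow_dvd_pow x (by lia)
  have hxn : x ^ (n + 1) ∈ subalgebraAddIdeal R (Ideal.span {x ^ (n + 1 + 1)}) := by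
    rw [← hn]
    exact mem_subalgebraAddIdeal.2 ⟨0, by simp⟩
  obtain ⟨r, hr⟩ := mem_subalgebraAddIdeal.1 hxn
  obtain ⟨s, hs⟩ := Ideal.mem_span_singleton'.1 hr
  have hrx : algebraMap R S r = x ^ (n + 1) * (1 - x * s) := by
    linear_combination hs
  have hrP : r ∈ Q₁.comap (algebraMap R S) := by
    rw [Ideal.mem_comap, hrx, pow_succ]
    exact Ideal.mul_mem_right _ _ (Ideal.mul_mem_left _ _ hx)
  have hC : algebraMap R S g * x * (1 - x * s) ∈ extConductor R S := by
    refine htcl.isRadical_extConductor ⟨n + 1, ?_⟩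
    have := Ideal.mul_mem_left _ (algebraMap R S g ^ n * (1 - x * s) ^ n) (hgP r hrP)
    convert this using 1
    rw [map_mul, hrx, mul_pow, mul_pow]
    ring
  -- t-closedness applies to `b = gxs` with parameter `g`
  have hb : algebraMap R S g * x * s ∈ (algebraMap R S).range := by
    refine htcl _ g ?_ ?_ <;> apply mem_range_of_mem_extConductor
    · convert Ideal.mul_mem_left _ (-(algebraMap R S g * s)) hC using 1
      ring
    · convert Ideal.mul_mem_left _ (-(algebraMap R S g * s) * (algebraMap R S g * x * s)) hC
        using 1
      ring
  have hb₂ := htrans _ hb (Ideal.mul_mem_right _ _ (Ideal.mul_mem_left _ _ hx))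
  have hC₂ := htrans _ (mem_range_of_mem_extConductor hC)
    (Ideal.mul_mem_right _ _ (Ideal.mul_mem_left _ _ hx))
  have hgx : algebraMap R S g * x ∉ Q₂ := fun hmem => (h₂.mem_or_mem hmem).elim hg₂ hx₂
  have hs₂ := (h₂.mem_or_mem hb₂).resolve_left hgx
  have hone := (h₂.mem_or_mem hC₂).resolve_left hgx
  refine h₂.ne_top ((Ideal.eq_top_iff_one _).2 ?_)
  simpa using add_mem hone (Ideal.mul_mem_left _ x hs₂)

end

/-- For an integral t-closed FCP extension `R ⊆ S`, the contraction
map `Spec S → Spec R` is bijective. -/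
theorem stmt_12 {R S : Type*} [CommRing R] [CommRing S] [Algebra R S]
    (hinj : Function.Injective (algebraMap R S)) (hFCP : IsFCPExt R S)
    (hint : Algebra.IsIntegral R S) (htcl : IsTClosedExt R S) :
    Function.Bijective (PrimeSpectrum.comap (algebraMap R S)) := by
  refine ⟨fun Q₁ Q₂ h => ?_, fun P => ?_⟩
  · have h' := congrArg PrimeSpectrum.asIdeal h
    exact PrimeSpectrum.ext (le_antisymm (le_of_comap_eq hFCP htcl _ _ h')
      (le_of_comap_eq hFCP htcl _ _ h'.symm))
  · obtain ⟨Q, -, hQ, hQP⟩ := Ideal.exists_ideal_over_prime_of_isIntegral P.asIdeal (⊥ : Ideal S)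
      (by
        rw [← RingHom.ker_eq_comap_bot, (RingHom.injective_iff_ker_eq_bot _).1 hinj]
        exact bot_le)
    exact ⟨⟨Q, hQ⟩, PrimeSpectrum.ext hQP⟩
end

section
/- Let R ⊆ S be an integral FCP ring extension and let T ∈ [R,S] be the t-closure of R in S (i.e., R ⊆ T is infra-integral and T ⊆ S is t-closed). Assume T ⊆ S is catenarian, and set m := ℓ[R,T] and r := ℓ[T,S]. Then every maximal chain of [R,S] from R to S that contains T has length m + r. -/
/-- The residual extension `κ_R(P) → κ_S(Q)` (for `P = Q ∩ R`) is an isomorphism. -/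
def ResidualExtIsIso {R S : Type*} [CommRing R] [CommRing S] (f : R →+* S)
    (Q : Ideal S) [Q.IsPrime] : Prop :=
  Function.Bijective
    (IsLocalRing.ResidueField.map
      (Localization.localRingHom (Q.comap f) Q f rfl))

/-- `R ⊆ S` is infra-integral: it is integral and all residual extensions
are isomorphisms. -/
def IsInfraIntegral (R S : Type*) [CommRing R] [CommRing S] [Algebra R S] : Prop :=
  Algebra.IsIntegral R S ∧
    ∀ (Q : Ideal S) (_ : Q.IsPrime), ResidualExtIsIso (algebraMap R S) Q

/-- The subextension `T ⊆ S` is t-closed. -/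
def IsTClosedIn {R S : Type*} [CommRing R] [CommRing S] [Algebra R S]
    (T : Subalgebra R S) : Prop :=
  ∀ (b : S), ∀ r ∈ T, b ^ 2 - r * b ∈ T → b ^ 3 - r * b ^ 2 ∈ T → b ∈ T

/-- `T` is the t-closure of `R` in `S`: `R ⊆ T` is infra-integral and `T ⊆ S`
is t-closed. -/
def IsTClosure {R S : Type*} [CommRing R] [CommRing S] [Algebra R S]
    (T : Subalgebra R S) : Prop :=
  IsInfraIntegral R T ∧ IsTClosedIn T

/-! ### Chains in ordered sets -/

/-- Along a covering chain in a modular lattice, each interval `[c 0, c i]` carries a strictly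
increasing rank function with values at most `i`; so chains in it have length at most `i`. -/
lemma exists_strictMonoOn_of_covBy {α : Type*} [Lattice α] [IsModularLattice α]
    {n : ℕ} (c : Fin (n + 1) → α) (i : Fin (n + 1))
    (h : ∀ j : Fin n, j.succ ≤ i → c j.castSucc ⋖ c j.succ) :
    ∃ g : α → ℕ, StrictMonoOn g (Set.Icc (c 0) (c i)) ∧ ∀ y, g y ≤ i := by
  classical
  induction i using Fin.induction with
  | zero =>
    refine ⟨fun _ => 0, ?_, fun _ => by simp⟩
    intro x hx y hy hxy
    exact absurd (hy.2.trans hx.1) (not_le_of_gt hxy)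
  | succ i ih =>
    obtain ⟨g, hg, hgi⟩ := ih fun j hj => h j (hj.trans i.castSucc_lt_succ.le)
    have hcov := h i le_rfl
    have h0 : c 0 ≤ c i.castSucc := by
      have : ∀ k : Fin (n + 1), k ≤ i.castSucc → c 0 ≤ c k := by
        intro k
        induction k using Fin.induction with
        | zero => intro _; exact le_rfl
        | succ k ihk =>
          intro hk
          exact (ihk (k.castSucc_lt_succ.le.trans hk)).trans
            (h k (hk.trans i.castSucc_lt_succ.le)).le
      exact this _ le_rfl
    set z := c i.castSucc
    refine ⟨fun y => g (y ⊓ z) + if y ≤ z then 0 else 1, ?_, ?_⟩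
    · intro x hx y hy hxy
      have mem : ∀ w ∈ Set.Icc (c 0) (c i.succ), w ⊓ z ∈ Set.Icc (c 0) z :=
        fun w hw => ⟨le_inf hw.1 h0, inf_le_right⟩
      have hsup : ∀ w ∈ Set.Icc (c 0) (c i.succ), ¬ w ≤ z → w ⊔ z = c i.succ := by
        intro w hw hwz
        refine (hcov.eq_or_eq le_sup_right (sup_le hw.2 hcov.le)).resolve_left fun he => hwz ?_
        exact he ▸ le_sup_left
      by_cases hxz : x ≤ z
      · by_cases hyz : y ≤ z
        · simp only [hxz, hyz, if_true, inf_of_le_left, add_zero]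
          exact hg ⟨hx.1, hxz⟩ ⟨hy.1, hyz⟩ hxy
        · have := hg.monotoneOn (mem x hx) (mem y hy) (inf_le_inf_right z hxy.le)
          simp only [hxz, hyz, if_true, if_false]
          omega
      · have hyz : ¬ y ≤ z := fun hyz => hxz (hxy.le.trans hyz)
        have := hg (mem x hx) (mem y hy)
          (inf_lt_inf_of_lt_of_sup_le_sup hxy (by rw [hsup x hx hxz, hsup y hy hyz]))
        simp only [hxz, hyz, if_false]
        omega
    · intro y
      have := hgi (y ⊓ z)
      have h2 : (if y ≤ z then 0 else 1) ≤ 1 := by split_ifs <;> simp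
      simp only [Fin.val_succ, Fin.val_castSucc] at this ⊢
      omega

lemma le_of_strictMono_fin {k : ℕ} (f : Fin (k + 1) → ℕ) (hf : StrictMono f) :
    k ≤ f (Fin.last k) := by
  have : ∀ j : Fin (k + 1), (j : ℕ) ≤ f j := by
    intro j
    induction j using Fin.induction with
    | zero => simp
    | succ j ih =>
      have := hf j.castSucc_lt_succ
      simp only [Fin.val_castSucc, Fin.val_succ] at *
      omega
  simpa using this (Fin.last k)

/-- If every chain from `T` to `U` has length at most `N`, and a chain of length `N` exists, then
the supremum in `extLength` is attained and equals `N`. -/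
lemma extLength_eq {α : Type*} [PartialOrder α] {T U : α} {N : ℕ}
    (c : Fin (N + 1) → α) (hc : StrictMono c) (h0 : c 0 = T) (h1 : c (Fin.last N) = U)
    (hle : ∀ (k : ℕ) (d : Fin (k + 1) → α), StrictMono d → d 0 = T → d (Fin.last k) = U → k ≤ N) :
    extLength T U = N := by
  refine IsGreatest.csSup_eq ⟨⟨c, hc, h0, h1⟩, ?_⟩
  rintro k ⟨d, hd, hd0, hd1⟩
  exact hle k d hd hd0 hd1

lemma wellFounded_of_isFCPExt {R S : Type*} [CommRing R] [CommRing S] [Algebra R S]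
    (h : IsFCPExt R S) :
    WellFoundedLT (Subalgebra R S) ∧ WellFoundedGT (Subalgebra R S) := by
  constructor
  · refine ⟨RelEmbedding.wellFounded_iff_isEmpty.2 ⟨fun f => ?_⟩⟩
    have := h (Set.range f) (by
      rintro _ ⟨a, rfl⟩ _ ⟨b, rfl⟩ hne
      rcases lt_trichotomy a b with hab | hab | hab
      · exact Or.inr (f.map_rel_iff.2 hab).le
      · exact absurd (congrArg f hab) hne
      · exact Or.inl (f.map_rel_iff.2 hab).le)
    exact Set.infinite_range_of_injective f.injective this
  · refine ⟨RelEmbedding.wellFounded_iff_isEmpty.2 ⟨fun f => ?_⟩⟩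
    have := h (Set.range f) (by
      rintro _ ⟨a, rfl⟩ _ ⟨b, rfl⟩ hne
      rcases lt_trichotomy a b with hab | hab | hab
      · exact Or.inl (f.map_rel_iff.2 hab).le
      · exact absurd (congrArg f hab) hne
      · exact Or.inr (f.map_rel_iff.2 hab).le)
    exact Set.infinite_range_of_injective f.injective this

/-! ### Residue fields of infra-integral extensions -/

lemma exists_sub_algebraMap_mem_of_infraIntegral {R T : Type*} [CommRing R] [CommRing T]
    [Algebra R T] (h : IsInfraIntegral R T) (Q : Ideal T) [hQ : Q.IsMaximal] (x : T) :
    ∃ r : R, x - algebraMap R T r ∈ Q := by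
  have := h.1
  have hP : (Q.comap (algebraMap R T)).IsMaximal :=
    Ideal.isMaximal_comap_of_isIntegral_of_isMaximal Q
  obtain ⟨y, hy⟩ := (h.2 Q inferInstance).2
    (IsLocalRing.residue _ (algebraMap T (Localization.AtPrime Q) x))
  obtain ⟨z, rfl⟩ := IsLocalRing.residue_surjective y
  obtain ⟨⟨r, s⟩, hz⟩ := IsLocalization.surj (Q.comap (algebraMap R T)).primeCompl z
  rw [IsLocalRing.ResidueField.map_residue] at hy
  have h1 := congrArg (Localization.localRingHom (Q.comap (algebraMap R T)) Q
    (algebraMap R T) rfl) hz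
  simp only [map_mul, Localization.localRingHom_to_map] at h1
  have h2 := congrArg (IsLocalRing.residue (Localization.AtPrime Q)) h1
  rw [map_mul, hy, ← map_mul, ← map_mul, ← sub_eq_zero, ← map_sub, ← map_sub,
    IsLocalRing.residue_eq_zero_iff] at h2
  have h3 : x * algebraMap R T s - algebraMap R T r ∈ Q :=
    (IsLocalization.AtPrime.to_map_mem_maximal_iff (Localization.AtPrime Q) Q _).1 h2
  obtain ⟨u, hu⟩ := hP.exists_inv s.2
  obtain ⟨v, hv, huv⟩ := hu
  refine ⟨u * r, ?_⟩
  have hv' : algebraMap R T v ∈ Q := hv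
  have e : algebraMap R T u * algebraMap R T s + algebraMap R T v = 1 := by
    rw [← map_mul, ← map_add, huv, map_one]
  have : x - algebraMap R T (u * r) =
      algebraMap R T u * (x * algebraMap R T s - algebraMap R T r) + x * algebraMap R T v := by
    rw [map_mul]
    linear_combination (-x) * e
  rw [this]
  exact Q.add_mem (Q.mul_mem_left _ h3) (Q.mul_mem_left _ hv')

/-- A subalgebra `B` of an infra-integral extension `T` inherits from `T` that all its residue
fields at maximal ideals are images of `R`, by lying over for `B ⊆ T`. -/
lemma exists_sub_algebraMap_mem {R S : Type*} [CommRing R] [CommRing S] [Algebra R S]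
    {B T : Subalgebra R S} (hBT : B ≤ T) (h : IsInfraIntegral R T)
    (Q : Ideal B) [hQ : Q.IsMaximal] (x : B) :
    ∃ r : R, x - algebraMap R B r ∈ Q := by
  have := h.1
  let _ : Algebra B T := (Subalgebra.inclusion hBT).toRingHom.toAlgebra
  have : IsScalarTower R B T := IsScalarTower.of_algebraMap_eq fun _ => rfl
  have : Algebra.IsIntegral B T := Algebra.IsIntegral.tower_top R
  have hi : Function.Injective (algebraMap B T) := Subalgebra.inclusion_injective hBT
  obtain ⟨Q', hQ', hc⟩ := Ideal.exists_ideal_over_maximal_of_isIntegral (S := T) Q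
    (by rw [(RingHom.injective_iff_ker_eq_bot _).1 hi]; exact bot_le)
  obtain ⟨r, hr⟩ := exists_sub_algebraMap_mem_of_infraIntegral h Q' (algebraMap B T x)
  refine ⟨r, ?_⟩
  rw [← hc, Ideal.mem_comap, map_sub]
  exact hr

/-! ### Minimal infra-integral extensions have simple quotient -/

/-- For a maximal proper subalgebra `A` and an ideal `J` of `B`, the intermediate ring `A + J` is
either `A` or `B`. -/
lemma ideal_le_or_forall_exists {R B : Type*} [CommRing R] [CommRing B] [Algebra R B]
    {A : Subalgebra R B} (hA : IsCoatom A) (J : Ideal B) :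
    (∀ x ∈ J, x ∈ A) ∨ ∀ x, ∃ a ∈ A, x - a ∈ J := by
  set C : Subalgebra R B := (A.map (Ideal.Quotient.mkₐ R J)).comap (Ideal.Quotient.mkₐ R J)
  have memC : ∀ x, x ∈ C ↔ ∃ a ∈ A, x - a ∈ J := by
    intro x
    simp only [C, Subalgebra.mem_comap, Subalgebra.mem_map, Ideal.Quotient.mkₐ_eq_mk]
    refine exists_congr fun a => and_congr_right fun _ => ?_
    rw [eq_comm, Ideal.Quotient.eq]
  have hAC : A ≤ C := fun a ha => (memC a).2 ⟨a, ha, by simp⟩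
  rcases hA.le_iff.1 hAC with h | h
  · exact Or.inr fun x => (memC x).1 (h ▸ Algebra.mem_top)
  · exact Or.inl fun x hx => h ▸ (memC x).2 ⟨0, A.zero_mem, by simpa using hx⟩

/-- Nakayama's argument: some maximal ideal `M` of `A` has proper extension `M B` contained
in `A`. -/
lemma exists_isMaximal_map_le {R B : Type*} [CommRing R] [CommRing B] [Algebra R B]
    [Algebra.IsIntegral R B] {A : Subalgebra R B} (hA : IsCoatom A) :
    ∃ M : Ideal A, M.IsMaximal ∧ M.map (algebraMap A B) ≠ ⊤ ∧
      ∀ x ∈ M.map (algebraMap A B), x ∈ A := by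
  obtain ⟨b, hb⟩ : ∃ b, b ∉ A := by
    by_contra! h
    exact hA.1 (eq_top_iff.2 fun x _ => h x)
  have : Algebra.IsIntegral A B := Algebra.IsIntegral.tower_top R
  have hadj : Algebra.adjoin A {b} = ⊤ := by
    have hle : A ≤ (Algebra.adjoin A {b}).restrictScalars R :=
      fun a ha => (Algebra.adjoin A {b}).algebraMap_mem ⟨a, ha⟩
    have hbm : b ∈ (Algebra.adjoin A {b}).restrictScalars R :=
      (Subalgebra.mem_restrictScalars R).2 (Algebra.subset_adjoin (Set.mem_singleton b))
    rcases hA.le_iff.1 hle with h | h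
    · refine eq_top_iff.2 fun x _ => ?_
      have : x ∈ (Algebra.adjoin A {b}).restrictScalars R := by rw [h]; exact Algebra.mem_top
      exact (Subalgebra.mem_restrictScalars R).1 this
    · rw [h] at hbm
      exact absurd hbm hb
  have hfin : Module.Finite A B := by
    have := (Algebra.IsIntegral.isIntegral (R := A) b).fg_adjoin_singleton
    rw [hadj] at this
    exact ⟨this⟩
  have hne : Subalgebra.toSubmodule (⊥ : Subalgebra A B) ≠ ⊤ := by
    intro h
    have : b ∈ Subalgebra.toSubmodule (⊥ : Subalgebra A B) := h ▸ Submodule.mem_top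
    obtain ⟨a, rfl⟩ := Algebra.mem_bot.1 this
    exact hb a.2
  obtain ⟨N, hN, hle⟩ := (eq_top_or_exists_le_coatom _).resolve_left hne
  have hs : IsSimpleModule A (B ⧸ N) := isSimpleModule_iff_isCoatom.2 hN
  have hMN : ∀ x ∈ (Module.annihilator A (B ⧸ N)).map (algebraMap A B), x ∈ N := by
    intro x hx
    have hx' : x ∈ (Module.annihilator A (B ⧸ N)) • (⊤ : Submodule A B) := by
      rw [Ideal.smul_top_eq_map]; exact hx
    refine Submodule.smul_le.2 (fun a ha y _ => ?_) hx'
    rw [← Submodule.Quotient.mk_eq_zero, Submodule.Quotient.mk_smul]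
    exact Module.mem_annihilator.1 ha _
  refine ⟨Module.annihilator A (B ⧸ N), IsSimpleModule.annihilator_isMaximal, ?_, ?_⟩
  · intro h
    exact hN.1 (eq_top_iff.2 fun x _ => hMN x (h ▸ Submodule.mem_top))
  · refine (ideal_le_or_forall_exists hA _).resolve_right fun h => hN.1 (eq_top_iff.2 fun x _ => ?_)
    obtain ⟨a, ha, hxa⟩ := h x
    have : a ∈ N := hle (Algebra.mem_bot.2 ⟨⟨a, ha⟩, rfl⟩)
    simpa using N.add_mem (hMN _ hxa) this

/-- If `A` is a maximal proper subalgebra of the integral extension `B` of `R`, and `R` surjects onto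
all residue fields of `B` at maximal ideals, then `B = A + R b` for every `b ∉ A`. -/
lemma exists_sub_smul_mem {R B : Type*} [CommRing R] [CommRing B] [Algebra R B]
    [Algebra.IsIntegral R B]
    (hres : ∀ (Q : Ideal B), Q.IsMaximal → ∀ x, ∃ r : R, x - algebraMap R B r ∈ Q)
    {A : Subalgebra R B} (hA : IsCoatom A) {b : B} (hb : b ∉ A) (x : B) :
    ∃ t : R, x - t • b ∈ A := by
  obtain ⟨M, hM, hJtop, hJA⟩ := exists_isMaximal_map_le hA
  set J := M.map (algebraMap A B)
  have hQA : ∀ Q : Ideal B, Q.IsMaximal → J ≤ Q → ∀ a ∈ A, a ∈ Q → a ∈ J := by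
    intro Q hQ hJQ a ha haQ
    have h1 : M ≤ Q.comap (algebraMap A B) := Ideal.map_le_iff_le_comap.1 hJQ
    have h2 : M = Q.comap (algebraMap A B) :=
      hM.eq_of_le (Ideal.comap_ne_top _ hQ.ne_top) h1
    have h3 : (⟨a, ha⟩ : A) ∈ M := by rw [h2]; exact haQ
    exact Ideal.mem_map_of_mem (algebraMap A B) h3
  obtain ⟨Q, hQ, hJQ⟩ := Ideal.exists_le_maximal J hJtop
  -- A translate by an element of `R` moves `b` into `Q`.
  obtain ⟨r, hr⟩ := hres Q hQ b
  set b' := b - algebraMap R B r with hb'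
  have hb'A : b' ∉ A := fun h => hb (by
    simpa [hb'] using A.add_mem h (A.algebraMap_mem r))
  suffices ∃ t : R, x - t • b' ∈ A by
    obtain ⟨t, ht⟩ := this
    refine ⟨t, ?_⟩
    have e : x - t • b = (x - t • b') - algebraMap R B (t * r) := by
      simp only [hb', Algebra.smul_def, map_mul]; ring
    rw [e]
    exact A.sub_mem ht (A.algebraMap_mem _)
  by_cases huniq : ∀ Q₂ : Ideal B, Q₂.IsMaximal → J ≤ Q₂ → Q₂ = Q
  · -- `B / J` is local: minimality applied to `A + b' ^ 2 B` gives `b' ^ 2 B ⊆ A`.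
    have hsq : ∀ y ∈ Ideal.span {b' ^ 2}, y ∈ A := by
      refine (ideal_le_or_forall_exists hA _).resolve_right fun h => hb'A ?_
      obtain ⟨a, ha, hba⟩ := h b'
      obtain ⟨y, hy⟩ := Ideal.mem_span_singleton'.1 hba
      have haJ : a ∈ J := by
        refine hQA Q hQ hJQ a ha ?_
        have : a = b' - y * b' * b' := by linear_combination hy
        rw [this]
        exact Q.sub_mem hr (Q.mul_mem_left _ hr)
      -- `1 - y b'` is a unit modulo `J`, because `Q` is the only maximal ideal over `J`.
      have htop : J ⊔ Ideal.span {1 - y * b'} = ⊤ := by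
        by_contra hne
        obtain ⟨Q₂, hQ₂, hle⟩ := Ideal.exists_le_maximal _ hne
        obtain rfl := huniq Q₂ hQ₂ (le_sup_left.trans hle)
        have h1 : 1 - y * b' ∈ Q₂ :=
          hle (Ideal.mem_sup_right (Ideal.mem_span_singleton_self _))
        refine hQ.ne_top ((Ideal.eq_top_iff_one _).2 ?_)
        simpa using Q₂.add_mem h1 (Q₂.mul_mem_left y hr)
      obtain ⟨j, hj, w, hw, hjw⟩ := Submodule.mem_sup.1 ((Ideal.eq_top_iff_one _).1 htop)
      obtain ⟨u, rfl⟩ := Ideal.mem_span_singleton'.1 hw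
      apply hJA
      have : b' = b' * j + u * a := by
        linear_combination (-b') * hjw - u * hy
      rw [this]
      exact J.add_mem (J.mul_mem_left _ hj) (J.mul_mem_left _ haJ)
    have hsq' : b' * b' ∈ A := by
      have := hsq _ (Ideal.mem_span_singleton_self _)
      rwa [pow_two] at this
    -- `A + A b'` is a ring since `b' ^ 2 ∈ A`.
    let C : Subalgebra R B :=
      { carrier := {y | ∃ a ∈ A, ∃ a' ∈ A, y = a + a' * b'}
        mul_mem' := by
          rintro _ _ ⟨a, ha, a', ha', rfl⟩ ⟨d, hd, d', hd', rfl⟩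
          exact ⟨a * d + a' * d' * (b' * b'),
            A.add_mem (A.mul_mem ha hd) (A.mul_mem (A.mul_mem ha' hd') hsq'),
            a * d' + a' * d, A.add_mem (A.mul_mem ha hd') (A.mul_mem ha' hd), by ring⟩
        add_mem' := by
          rintro _ _ ⟨a, ha, a', ha', rfl⟩ ⟨d, hd, d', hd', rfl⟩
          exact ⟨a + d, A.add_mem ha hd, a' + d', A.add_mem ha' hd', by ring⟩
        algebraMap_mem' := fun s => ⟨_, A.algebraMap_mem s, 0, A.zero_mem, by simp⟩ }
    have hAC : A ≤ C := fun a ha => ⟨a, ha, 0, A.zero_mem, by simp⟩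
    have hbC : b' ∈ C := ⟨0, A.zero_mem, 1, A.one_mem, by simp⟩
    have hC : C = ⊤ := (hA.le_iff.1 hAC).resolve_right fun h => hb'A (h ▸ hbC)
    obtain ⟨a, ha, a', ha', rfl⟩ : x ∈ C := hC ▸ Algebra.mem_top
    obtain ⟨t, ht⟩ := hres Q hQ a'
    refine ⟨t, ?_⟩
    have h1 : a' - algebraMap R B t ∈ J :=
      hQA Q hQ hJQ _ (A.sub_mem ha' (A.algebraMap_mem t)) ht
    have e : a + a' * b' - t • b' = a + b' * (a' - algebraMap R B t) := by
      rw [Algebra.smul_def]; ring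
    rw [e]
    exact A.add_mem ha (hJA _ (J.mul_mem_left _ h1))
  · -- A second maximal ideal contains `J`: minimality applied to `A + (Q ⊓ Q₂)` gives `Q ⊓ Q₂ ⊆ A`.
    push Not at huniq
    obtain ⟨Q₂, hQ₂, hJQ₂, hne⟩ := huniq
    have hI : ∀ y ∈ Q ⊓ Q₂, y ∈ A := by
      refine (ideal_le_or_forall_exists hA _).resolve_right fun h => hne ?_
      refine (hQ.eq_of_le hQ₂.ne_top fun y hy => ?_).symm
      obtain ⟨a, ha, hya⟩ := h y
      have haQ : a ∈ Q := by simpa using Q.sub_mem hy hya.1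
      have := Q₂.add_mem hya.2 (hJQ₂ (hQA Q hQ hJQ a ha haQ))
      simpa using this
    have hb2 : b' ∉ Q₂ := fun h => hb'A (hI _ ⟨hr, h⟩)
    obtain ⟨s, hs⟩ := hres Q hQ x
    obtain ⟨u, v, hv, huv⟩ := hQ₂.exists_inv hb2
    obtain ⟨t, ht⟩ := hres Q₂ hQ₂ ((x - algebraMap R B s) * u)
    refine ⟨t, ?_⟩
    have hmem : x - algebraMap R B s - t • b' ∈ Q ⊓ Q₂ := by
      refine ⟨Q.sub_mem hs ?_, ?_⟩
      · rw [Algebra.smul_def]; exact Q.mul_mem_left _ hr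
      · have e : x - algebraMap R B s - t • b' =
            b' * ((x - algebraMap R B s) * u - algebraMap R B t) +
              (x - algebraMap R B s) * v := by
          rw [Algebra.smul_def]
          linear_combination (-(x - algebraMap R B s)) * huv
        rw [e]
        exact Q₂.add_mem (Q₂.mul_mem_left _ ht) (Q₂.mul_mem_left _ hv)
    have := A.add_mem (hI _ hmem) (A.algebraMap_mem s)
    have e : x - t • b' = x - algebraMap R B s - t • b' + algebraMap R B s := by ring
    rwa [e]

/-- Inside an infra-integral extension, a covering of subalgebras is a covering of
`R`-submodules. -/
lemma toSubmodule_covBy {R S : Type*} [CommRing R] [CommRing S] [Algebra R S]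
    {A B T : Subalgebra R S} (hAB : A ⋖ B) (hBT : B ≤ T) (h : IsInfraIntegral R T) :
    Subalgebra.toSubmodule A ⋖ Subalgebra.toSubmodule B := by
  have hTint := h.1
  have : Algebra.IsIntegral R B :=
    Algebra.IsIntegral.of_injective (Subalgebra.inclusion hBT)
      (Subalgebra.inclusion_injective hBT)
  have hco : IsCoatom (A.comap B.val) := by
    refine ⟨fun htop => hAB.lt.not_ge fun x hx => ?_, fun C hC => ?_⟩
    · have : (⟨x, hx⟩ : B) ∈ A.comap B.val := htop ▸ Algebra.mem_top
      exact this
    · have h1 : A ≤ C.map B.val := fun a ha =>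
        ⟨⟨a, hAB.le ha⟩, hC.le (show (⟨a, hAB.le ha⟩ : B) ∈ A.comap B.val from ha), rfl⟩
      have h2 : C.map B.val ≤ B := by
        rintro _ ⟨y, _, rfl⟩
        exact y.2
      rcases hAB.eq_or_eq h1 h2 with he | he
      · refine absurd hC.le (fun _ => hC.not_ge fun y hy => ?_)
        show (y : S) ∈ A
        rw [← he]
        exact ⟨y, hy, rfl⟩
      · refine eq_top_iff.2 fun y _ => ?_
        have : (y : S) ∈ C.map B.val := he.ge y.2
        obtain ⟨z, hz, hzy⟩ := this
        rwa [← Subtype.ext hzy]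
  refine ⟨hAB.lt, fun N hAN hNB => ?_⟩
  obtain ⟨b, hbN, hbA⟩ := SetLike.exists_of_lt hAN
  refine hNB.not_ge fun x hx => ?_
  obtain ⟨t, ht⟩ := exists_sub_smul_mem
    (fun Q hQ x => exists_sub_algebraMap_mem hBT h Q x) hco
    (b := ⟨b, hNB.le hbN⟩) hbA ⟨x, hx⟩
  have ht' : x - t • b ∈ Subalgebra.toSubmodule A := ht
  simpa using N.add_mem (hAN.le ht') (N.smul_mem t hbN)

/-! ### The length of maximal chains through the t-closure -/

/-- Let `R ⊆ S` be an integral FCP extension with t-closure `T`, and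
assume `T ⊆ S` is catenarian. Then every maximal chain from `R` to `S` containing `T`
has length `ℓ[R,T] + ℓ[T,S]`. -/
theorem stmt_14 {R S : Type*} [CommRing R] [CommRing S] [Algebra R S]
    (hinj : Function.Injective (algebraMap R S)) (hFCP : IsFCPExt R S)
    (hint : Algebra.IsIntegral R S)
    (T : Subalgebra R S) (hT : IsTClosure T)
    (hcat : IsCatenarianFromTo T (⊤ : Subalgebra R S))
    (n : ℕ) (c : Fin (n + 1) → Subalgebra R S)
    (hc : IsMaxChainFromTo (⊥ : Subalgebra R S) ⊤ n c)
    (hmem : ∃ i, c i = T) :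
    n = extLength (⊥ : Subalgebra R S) T + extLength T (⊤ : Subalgebra R S) := by
  obtain ⟨i, hi⟩ := hmem
  obtain ⟨hc0, hc1, hcov⟩ := hc
  have hmono : StrictMono c := Fin.strictMono_iff_lt_succ.2 fun j => (hcov j).lt
  have hin : (i : ℕ) ≤ n := Nat.lt_succ_iff.1 i.2
  have hbot : extLength (⊥ : Subalgebra R S) T = i := by
    refine extLength_eq (fun j : Fin (i + 1) => c ⟨j, by omega⟩) ?_ hc0 ?_ ?_
    · intro a b hab
      exact hmono hab
    · exact hi
    · intro k d hd hd0 hd1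
      obtain ⟨g, hg, hgi⟩ := exists_strictMonoOn_of_covBy
        (fun j => Subalgebra.toSubmodule (c j)) i fun j hj =>
          toSubmodule_covBy (hcov j) (hi ▸ hmono.monotone hj) hT.1
      refine (le_of_strictMono_fin (fun j => g (Subalgebra.toSubmodule (d j))) ?_).trans (hgi _)
      have hm : ∀ j, Subalgebra.toSubmodule (d j) ∈
          Set.Icc (Subalgebra.toSubmodule (c 0)) (Subalgebra.toSubmodule (c i)) := by
        intro j
        constructor
        · show c 0 ≤ d j
          rw [hc0]; exact bot_le
        · show d j ≤ c i
          rw [hi, ← hd1]; exact hd.monotone (Fin.le_last j)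
      intro a b hab
      exact hg (hm a) (hm b) (hd hab)
  have htop : extLength T (⊤ : Subalgebra R S) = n - i := by
    set e : Fin (n - i + 1) → Subalgebra R S := fun j => c ⟨i + j, by omega⟩ with he
    have e0 : e 0 = T := hi
    have e1 : e (Fin.last (n - i)) = ⊤ := by
      rw [← hc1]
      exact congrArg c (Fin.ext (by simp; omega))
    have ecov : ∀ j : Fin (n - i), e j.castSucc ⋖ e j.succ := fun j =>
      hcov ⟨i + j, by omega⟩
    refine extLength_eq e (Fin.strictMono_iff_lt_succ.2 fun j => (ecov j).lt) e0 e1 ?_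
    intro k d hd hd0 hd1
    obtain ⟨_, _⟩ := wellFounded_of_isFCPExt hFCP
    obtain ⟨t, f, hf, hf0, hf1⟩ := LTSeries.exists_relSeries_covBy
      (⟨k, d, fun j => hd j.castSucc_lt_succ⟩ : LTSeries (Subalgebra R S))
    have hlen : t.length = n - i := by
      refine hcat _ _ t e ⟨?_, ?_, fun j => t.step j⟩ ⟨e0, e1, ecov⟩
      · rw [← hd0, ← hf0]
        exact congrFun hf 0
      · rw [← hd1, ← hf1]
        exact congrFun hf (Fin.last k)
    have := Fintype.card_le_of_embedding f
    simp only [Fintype.card_fin] at this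
    omega
  omega
end

section
/- Let R ⊆ S be an integral FCP ring extension and let T ∈ [R,S] be the t-closure of R in S (i.e., R ⊆ T is infra-integral and T ⊆ S is t-closed). If T ⊆ S is catenarian and [R,S] = [R,T] ∪ [T,S], then R ⊆ S is catenarian. -/
/-! ### Minimal integral extensions -/

/-- The `R`-subalgebra `A + I` of `B`, for a subalgebra `A` and an ideal `I` of `B`. -/
def addIdeal {R B : Type*} [CommRing R] [CommRing B] [Algebra R B]
    (A : Subalgebra R B) (I : Ideal B) : Subalgebra R B :=
  (A.map (Ideal.Quotient.mkₐ R I)).comap (Ideal.Quotient.mkₐ R I)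

lemma mem_addIdeal {R B : Type*} [CommRing R] [CommRing B] [Algebra R B]
    {A : Subalgebra R B} {I : Ideal B} {x : B} :
    x ∈ addIdeal A I ↔ ∃ a ∈ A, x - a ∈ I := by
  simp only [addIdeal, Subalgebra.mem_comap, Subalgebra.mem_map, Ideal.Quotient.mkₐ_eq_mk]
  refine exists_congr fun a => and_congr_right fun _ => ?_
  rw [eq_comm, Ideal.Quotient.eq]

lemma le_addIdeal {R B : Type*} [CommRing R] [CommRing B] [Algebra R B]
    (A : Subalgebra R B) (I : Ideal B) : A ≤ addIdeal A I :=
  fun a ha => mem_addIdeal.2 ⟨a, ha, by simp⟩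

lemma finite_of_isCoatom {R B : Type*} [CommRing R] [CommRing B] [Algebra R B]
    (hint : Algebra.IsIntegral R B) {A : Subalgebra R B} (hA : IsCoatom A) :
    Module.Finite A B := by
  obtain ⟨b, -, hb⟩ := SetLike.exists_of_lt hA.lt_top
  have hlt : A < (Algebra.adjoin A {b}).restrictScalars R := by
    refine lt_of_le_of_ne (fun a ha => ?_) fun h => hb ?_
    · exact (Algebra.adjoin A {b}).algebraMap_mem ⟨a, ha⟩
    · rw [h]
      exact Algebra.self_mem_adjoin_singleton A b
  have htop : Algebra.adjoin A {b} = ⊤ := by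
    refine eq_top_iff.2 fun x _ => ?_
    have : x ∈ (Algebra.adjoin A {b}).restrictScalars R := by
      rw [hA.2 _ hlt]; trivial
    exact this
  have hbi : IsIntegral A b := (hint.isIntegral b).tower_top
  have := hbi.fg_adjoin_singleton
  rw [htop] at this
  exact ⟨this⟩

/-- The crucial maximal ideal `M` of a minimal integral extension `A ⊂ B`: the ideal `M B` of `B`
is contained in `A`. -/
lemma exists_crucial {R B : Type*} [CommRing R] [CommRing B] [Algebra R B]
    (hint : Algebra.IsIntegral R B) {A : Subalgebra R B} (hA : IsCoatom A) :
    ∃ M : Ideal A, M.IsMaximal ∧ ∀ x ∈ M.map (algebraMap A B), x ∈ A := by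
  have := finite_of_isCoatom hint hA
  have hne : (⊥ : Subalgebra A B).toSubmodule ≠ ⊤ := by
    intro h
    refine hA.1 (eq_top_iff.2 fun x _ => ?_)
    have hx : x ∈ (⊥ : Subalgebra A B).toSubmodule := by rw [h]; trivial
    obtain ⟨a, rfl⟩ := Algebra.mem_bot.1 ((Subalgebra.mem_toSubmodule _).1 hx)
    exact a.2
  obtain ⟨W, hW, hAW⟩ := (eq_top_or_exists_le_coatom
    (⊥ : Subalgebra A B).toSubmodule).resolve_left hne
  have : IsSimpleModule A (B ⧸ W) := isSimpleModule_iff_isCoatom.2 hW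
  refine ⟨Module.annihilator A (B ⧸ W), IsSimpleModule.annihilator_isMaximal, ?_⟩
  set M := Module.annihilator A (B ⧸ W) with hM
  have hMW : ∀ x ∈ M.map (algebraMap A B), x ∈ W := by
    have hle : M • (⊤ : Submodule A B) ≤ W := by
      refine Submodule.smul_le.2 fun a ha x _ => ?_
      have := Module.mem_annihilator.1 ha (Submodule.Quotient.mk x)
      rwa [← Submodule.Quotient.mk_smul, Submodule.Quotient.mk_eq_zero] at this
    rw [Ideal.smul_top_eq_map] at hle
    exact fun x hx => hle hx
  by_contra! hcon
  obtain ⟨x, hx, hxA⟩ := hcon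
  have htop : addIdeal A (M.map (algebraMap A B)) = ⊤ := by
    refine hA.2 _ (lt_of_le_of_ne (le_addIdeal _ _) fun h => hxA ?_)
    rw [h]
    exact mem_addIdeal.2 ⟨0, A.zero_mem, by simpa using hx⟩
  refine hW.1 (eq_top_iff.2 fun y _ => ?_)
  have hy : y ∈ addIdeal A (M.map (algebraMap A B)) := by rw [htop]; trivial
  obtain ⟨a, ha, hya⟩ := mem_addIdeal.1 hy
  have h1 : a ∈ W := hAW ((Subalgebra.mem_toSubmodule _).2
    ((⊥ : Subalgebra A B).algebraMap_mem ⟨a, ha⟩))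
  simpa using W.add_mem (hMW _ hya) h1

/-- A maximal proper subalgebra is a maximal proper `R`-submodule as soon as the extension is
integral with trivial residual extensions at the maximal ideals. -/
theorem isCoatom_toSubmodule {R B : Type*} [CommRing R] [CommRing B] [Algebra R B]
    (hint : Algebra.IsIntegral R B)
    (hres : ∀ Q : Ideal B, Q.IsMaximal → ∀ b : B, ∃ r : R, b - algebraMap R B r ∈ Q)
    {A : Subalgebra R B} (hA : IsCoatom A) : IsCoatom A.toSubmodule := by
  obtain ⟨M, hM, hMA⟩ := exists_crucial hint hA
  set I := M.map (algebraMap A B) with hI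
  have hItop : I ≠ ⊤ := fun h => hA.1 (eq_top_iff.2 fun x _ => hMA x (by rw [h]; trivial))
  obtain ⟨N, hN, hIN⟩ := Ideal.exists_le_maximal I hItop
  have hAN : ∀ a ∈ A, a ∈ N → a ∈ I := by
    intro a ha haN
    have hMN : M = N.comap (algebraMap A B) :=
      hM.eq_of_le (Ideal.comap_ne_top _ hN.ne_top) (Ideal.map_le_iff_le_comap.1 hIN)
    have : (⟨a, ha⟩ : A) ∈ M := by rw [hMN]; exact haN
    exact Ideal.mem_map_of_mem (algebraMap A B) this
  -- `N ⧸ I` is a simple `B`-module: it is generated by each of its nonzero elements.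
  have hsimple : ∀ x ∈ N, x ∉ I → ∀ y ∈ N, ∃ c : B, y - c * x ∈ I := by
    intro x hxN hxI y hyN
    have htop : addIdeal A (I ⊔ Ideal.span {x}) = ⊤ := by
      refine hA.2 _ (lt_of_le_of_ne (le_addIdeal _ _) fun h => hxI (hAN x ?_ hxN))
      rw [h]
      exact mem_addIdeal.2 ⟨0, A.zero_mem, by
        simpa using Ideal.mem_sup_right (Ideal.mem_span_singleton_self x)⟩
    have hle : I ⊔ Ideal.span {x} ≤ N :=
      sup_le hIN ((Ideal.span_singleton_le_iff_mem N).2 hxN)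
    have hy : y ∈ addIdeal A (I ⊔ Ideal.span {x}) := by rw [htop]; trivial
    obtain ⟨a, ha, hya⟩ := mem_addIdeal.1 hy
    have haN : a ∈ N := by simpa using N.sub_mem hyN (hle hya)
    have hyI : y ∈ I ⊔ Ideal.span {x} := by
      simpa using Ideal.add_mem _ hya (Ideal.mem_sup_left (hAN a ha haN))
    obtain ⟨i, hi, z, hz, rfl⟩ := Submodule.mem_sup.1 hyI
    obtain ⟨c, rfl⟩ := Ideal.mem_span_singleton'.1 hz
    exact ⟨c, by simpa using hi⟩
  refine ⟨fun h => hA.1 (Algebra.toSubmodule_eq_top.1 h), fun X hX => ?_⟩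
  obtain ⟨x, hxX, hxA⟩ := SetLike.exists_of_lt hX
  have hAX : ∀ a ∈ A, a ∈ X := fun a ha => hX.le ((Subalgebra.mem_toSubmodule _).2 ha)
  obtain ⟨r, hr⟩ := hres N hN x
  set n := x - algebraMap R B r with hn
  have hnX : n ∈ X := X.sub_mem hxX (hAX _ (A.algebraMap_mem r))
  have hnI : n ∉ I := fun h => hxA (by
    simpa [hn] using A.add_mem (hMA _ h) (A.algebraMap_mem r))
  -- The annihilator of the class of `n` in `N ⧸ I`, a maximal ideal because `N ⧸ I` is simple.
  let J : Ideal B := Submodule.comap (LinearMap.toSpanSingleton B B n) I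
  have hJ : ∀ b, b ∈ J ↔ b * n ∈ I := fun b => by
    simp [J, Submodule.mem_comap]
  have hJmax : J.IsMaximal := by
    refine Ideal.isMaximal_iff.2 ⟨by simpa [hJ] using hnI, fun J' b hJJ' hb hbJ' => ?_⟩
    obtain ⟨c, hc⟩ := hsimple (b * n) (N.mul_mem_left b hr) (fun h => hb ((hJ b).2 h)) n hr
    have h1 : 1 - c * b ∈ J := (hJ _).2 (by convert hc using 1; ring)
    simpa using J'.add_mem (hJJ' h1) (J'.mul_mem_left c hbJ')
  refine eq_top_iff.2 fun b _ => ?_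
  obtain ⟨s, hs⟩ := hres N hN b
  obtain ⟨c, hc⟩ := hsimple n hr hnI _ hs
  obtain ⟨t, ht⟩ := hres J hJmax c
  have e : b = algebraMap R B s + ((b - algebraMap R B s) - c * n)
      + (c - algebraMap R B t) * n + t • n := by
    rw [Algebra.smul_def]; ring
  rw [e]
  exact X.add_mem (X.add_mem (X.add_mem (hAX _ (A.algebraMap_mem s)) (hAX _ (hMA _ hc)))
    (hAX _ (hMA _ ((hJ _).1 ht)))) (X.smul_mem t hnX)

/-! ### Residual extensions -/

lemma exists_sub_mem_of_infraIntegral {R T : Type*} [CommRing R] [CommRing T] [Algebra R T]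
    (h : IsInfraIntegral R T) (Q : Ideal T) (hQ : Q.IsMaximal) (t : T) :
    ∃ r : R, t - algebraMap R T r ∈ Q := by
  have hi := h.1
  have hP : (Q.comap (algebraMap R T)).IsMaximal :=
    Ideal.isMaximal_comap_of_isIntegral_of_isMaximal Q
  obtain ⟨y, hy⟩ := (h.2 Q hQ.isPrime).2 (algebraMap T Q.ResidueField t)
  obtain ⟨r', rfl⟩ := (Ideal.bijective_algebraMap_quotient_residueField
    (Q.comap (algebraMap R T))).2 y
  obtain ⟨r, rfl⟩ := Ideal.Quotient.mk_surjective r'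
  refine ⟨r, ?_⟩
  have h2 : algebraMap T Q.ResidueField (algebraMap R T r) = algebraMap T Q.ResidueField t := by
    rw [← hy]
    change _ = IsLocalRing.ResidueField.map _ (IsLocalRing.residue _ (algebraMap R _ r))
    rw [IsLocalRing.ResidueField.map_residue, Localization.localRingHom_to_map]
    rfl
  rw [← Ideal.algebraMap_residueField_eq_zero, map_sub, h2, sub_self]

/-- Triviality of the residual extensions descends from `T` to an intermediate algebra `B`, since
the maximal ideals of `B` lift to `T` by integrality. -/
lemma exists_sub_mem_of_le {R S : Type*} [CommRing R] [CommRing S] [Algebra R S]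
    {T B : Subalgebra R S} (h : IsInfraIntegral R T) (hBT : B ≤ T)
    (Q : Ideal B) (hQ : Q.IsMaximal) (b : B) :
    ∃ r : R, b - algebraMap R B r ∈ Q := by
  let f := Subalgebra.inclusion hBT
  have hf : f.toRingHom.IsIntegral := by
    have : (f.toRingHom.comp (algebraMap R B)).IsIntegral := by
      rw [AlgHom.toRingHom_eq_coe, f.comp_algebraMap]
      exact fun x => h.1.isIntegral x
    exact RingHom.IsIntegral.tower_top _ _ this
  algebraize [f.toRingHom]
  have : Algebra.IsIntegral B T := ⟨hf⟩
  have hinj : Function.Injective (algebraMap B T) := Subalgebra.inclusion_injective hBT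
  obtain ⟨Q', hQ', hQQ'⟩ := Ideal.exists_ideal_over_maximal_of_isIntegral (S := T) Q (by
    rw [(RingHom.injective_iff_ker_eq_bot _).1 hinj]; exact bot_le)
  obtain ⟨r, hr⟩ := exists_sub_mem_of_infraIntegral h Q' hQ' (f b)
  refine ⟨r, ?_⟩
  rw [← hQQ', Ideal.mem_comap, map_sub]
  exact hr

/-- Coverings of subalgebras inside an infra-integral extension are coverings of `R`-submodules. -/
lemma covBy_toSubmodule {R S : Type*} [CommRing R] [CommRing S] [Algebra R S]
    {T A B : Subalgebra R S} (h : IsInfraIntegral R T) (hBT : B ≤ T) (hAB : A ⋖ B) :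
    A.toSubmodule ⋖ B.toSubmodule := by
  have hint : Algebra.IsIntegral R B := by
    have := h.1
    exact Algebra.IsIntegral.of_injective (Subalgebra.inclusion hBT)
      (Subalgebra.inclusion_injective hBT)
  have hco : IsCoatom (A.comap B.val) := by
    refine ⟨fun htop => hAB.lt.not_ge fun x hx => ?_, fun U hU => ?_⟩
    · have : (⟨x, hx⟩ : B) ∈ A.comap B.val := by rw [htop]; trivial
      exact this
    · have hUB : U.map B.val ≤ B := by
        rintro _ ⟨u, -, rfl⟩
        exact u.2
      have hAU : A ≤ U.map B.val := fun a ha =>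
        ⟨⟨a, hAB.le ha⟩, hU.le (show (⟨a, hAB.le ha⟩ : B) ∈ A.comap B.val from ha), rfl⟩
      obtain ⟨u, huU, huA⟩ := SetLike.exists_of_lt hU
      rcases hAB.eq_or_eq hAU hUB with e | e
      · refine absurd ?_ huA
        change (u : S) ∈ A
        rw [← e]
        exact ⟨u, huU, rfl⟩
      · refine eq_top_iff.2 fun x _ => ?_
        have hx : (x : S) ∈ U.map B.val := by rw [e]; exact x.2
        obtain ⟨v, hv, hvx⟩ := hx
        rwa [← Subtype.ext (show (v : S) = x from hvx)]
  have key := isCoatom_toSubmodule hint (exists_sub_mem_of_le h hBT) hco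
  refine ⟨hAB.lt, fun X hAX hXB => ?_⟩
  have htop : X.comap B.val.toLinearMap = ⊤ := by
    refine key.2 _ (lt_of_le_of_ne (fun a ha => hAX.le ha) fun e => ?_)
    obtain ⟨x, hxX, hxA⟩ := SetLike.exists_of_lt hAX
    have hx : (⟨x, hXB.le hxX⟩ : B) ∈ X.comap B.val.toLinearMap := hxX
    rw [← e] at hx
    exact hxA hx
  refine hXB.not_ge fun b hb => ?_
  have : (⟨b, hb⟩ : B) ∈ X.comap B.val.toLinearMap := by rw [htop]; trivial
  exact this

/-! ### Maximal chains -/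

lemma IsMaxChainFromTo.strictMono {α : Type*} [PartialOrder α] {T U : α} {n : ℕ}
    {c : Fin (n + 1) → α} (hc : IsMaxChainFromTo T U n c) : StrictMono c :=
  Fin.strictMono_iff_lt_succ.2 fun i => (hc.2.2 i).lt

/-- An infra-integral extension is catenarian, by the Jordan–Hölder theorem. -/
theorem isCatenarian_bot_of_infraIntegral {R S : Type*} [CommRing R] [CommRing S] [Algebra R S]
    {T : Subalgebra R S} (h : IsInfraIntegral R T) :
    IsCatenarianFromTo (⊥ : Subalgebra R S) T := by
  have hcov : ∀ {n : ℕ} {c : Fin (n + 1) → Subalgebra R S}, IsMaxChainFromTo ⊥ T n c →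
      ∀ i : Fin n, (c i.castSucc).toSubmodule ⋖ (c i.succ).toSubmodule := fun {n c} hc i =>
    covBy_toSubmodule h (hc.2.1 ▸ hc.strictMono.monotone (Fin.le_last _)) (hc.2.2 i)
  intro n m c d hc hd
  let s : CompositionSeries (Submodule R S) := ⟨n, fun i => (c i).toSubmodule, hcov hc⟩
  let t : CompositionSeries (Submodule R S) := ⟨m, fun i => (d i).toSubmodule, hcov hd⟩
  have hst : s.Equivalent t := by
    refine CompositionSeries.jordan_holder s t ?_ ?_
    · change (c 0).toSubmodule = (d 0).toSubmodule
      rw [hc.1, hd.1]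
    · change (c (Fin.last n)).toSubmodule = (d (Fin.last m)).toSubmodule
      rw [hc.2.1, hd.2.1]
  exact hst.length_eq

/-- A maximal chain passes through every element comparable with everything, and splits there. -/
lemma IsMaxChainFromTo.split {α : Type*} [PartialOrder α] [BoundedOrder α] {T : α} {n : ℕ}
    {c : Fin (n + 1) → α} (hc : IsMaxChainFromTo ⊥ ⊤ n c) (hT : ∀ U : α, U ≤ T ∨ T ≤ U) :
    ∃ k l : ℕ, k + l = n ∧ (∃ c' : Fin (k + 1) → α, IsMaxChainFromTo ⊥ T k c') ∧
      ∃ c' : Fin (l + 1) → α, IsMaxChainFromTo T ⊤ l c' := by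
  obtain ⟨k, hk⟩ : ∃ k, c k = T := by
    by_contra! hne
    -- If the chain avoided `T`, then by induction all its members would lie below `T`.
    have hle : ∀ i, c i ≤ T := by
      intro i
      induction i using Fin.induction with
      | zero => rw [hc.1]; exact bot_le
      | succ i ih =>
        rcases hT (c i.succ) with h | h
        · exact h
        · rcases (hc.2.2 i).eq_or_eq ih h with e | e
          · exact absurd e.symm (hne _)
          · exact absurd e.symm (hne _)
    refine hne (Fin.last n) (le_antisymm (hle _) ?_)
    rw [hc.2.1]
    exact le_top
  have hkn : k.1 ≤ n := Nat.lt_succ_iff.1 k.2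
  refine ⟨k.1, n - k.1, by omega, ⟨fun i => c ⟨i.1, by omega⟩, ?_, ?_, fun i => ?_⟩,
    ⟨fun i => c ⟨k.1 + i.1, by omega⟩, ?_, ?_, fun i => ?_⟩⟩
  · exact hc.1
  · exact hk
  · exact hc.2.2 ⟨i.1, by omega⟩
  · exact hk
  · rw [← hc.2.1]
    refine congrArg c (Fin.ext ?_)
    change k.1 + (n - k.1) = n
    omega
  · exact hc.2.2 ⟨k.1 + i.1, by omega⟩

/-- Let `R ⊆ S` be an integral FCP extension with t-closure `T`.
If `T ⊆ S` is catenarian and `[R,S] = [R,T] ∪ [T,S]`, then `R ⊆ S` is catenarian. -/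
theorem stmt_15 {R S : Type*} [CommRing R] [CommRing S] [Algebra R S]
    (hinj : Function.Injective (algebraMap R S)) (hFCP : IsFCPExt R S)
    (hint : Algebra.IsIntegral R S)
    (T : Subalgebra R S) (hT : IsTClosure T)
    (hcat : IsCatenarianFromTo T (⊤ : Subalgebra R S))
    (hsplit : ∀ U : Subalgebra R S, U ≤ T ∨ T ≤ U) :
    IsCatenarianExt R S := by
  intro n m c d hc hd
  obtain ⟨k, l, rfl, ⟨c₁, hc₁⟩, c₂, hc₂⟩ := hc.split hsplit
  obtain ⟨k', l', rfl, ⟨d₁, hd₁⟩, d₂, hd₂⟩ := hd.split hsplit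
  rw [isCatenarian_bot_of_infraIntegral hT.1 _ _ _ _ hc₁ hd₁, hcat _ _ _ _ hc₂ hd₂]
end

section
/- Let R ⊆ S be an integral FCP ring extension with S a local ring (equivalently, R is unbranched in S since the extension is integral), and let T ∈ [R,S] be the t-closure of R in S (i.e., R ⊆ T is infra-integral and T ⊆ S is t-closed). Then R ⊆ S is catenarian if and only if [R,S] = [R,T] ∪ [T,S] and T ⊆ S is catenarian. -/
/-! ### Counting covering steps in a partial order -/

/-- `CovSteps n a b`: there is a chain of `n` successive coverings leading from `a` up to `b`. -/
inductive CovSteps {α : Type*} [PartialOrder α] : ℕ → α → α → Prop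
  | refl (a : α) : CovSteps 0 a a
  | cons {n : ℕ} {a b c : α} : a ⋖ b → CovSteps n b c → CovSteps (n + 1) a c

namespace CovSteps

variable {α : Type*} [PartialOrder α]

theorem le {n : ℕ} {a b : α} (h : CovSteps n a b) : a ≤ b := by
  induction h with
  | refl => exact le_rfl
  | cons h _ ih => exact h.le.trans ih

theorem one_le {n : ℕ} {a b : α} (h : CovSteps n a b) (hne : a ≠ b) : 1 ≤ n := by
  cases h with
  | refl => exact absurd rfl hne
  | cons => omega

theorem two_le {n : ℕ} {a b : α} (h : CovSteps n a b) (hne : a ≠ b) (hc : ¬ a ⋖ b) : 2 ≤ n := by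
  cases h with
  | refl => exact absurd rfl hne
  | cons hab h' =>
    have := h'.one_le (fun he => hc (he ▸ hab))
    omega

theorem append {n m : ℕ} {a b c : α} (h : CovSteps n a b) (h' : CovSteps m b c) :
    CovSteps (n + m) a c := by
  induction h with
  | refl => simpa using h'
  | cons h _ ih => rw [Nat.add_right_comm]; exact cons h (ih h')

theorem of_isMaxChain {n : ℕ} : ∀ {a b : α} {c : Fin (n + 1) → α},
    IsMaxChainFromTo a b n c → CovSteps n a b := by
  induction n with
  | zero => rintro a b c ⟨rfl, rfl, -⟩; exact refl _
  | succ n ih =>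
    rintro a b c ⟨rfl, rfl, h⟩
    refine cons (h 0) (ih (c := fun i => c i.succ) ⟨rfl, rfl, fun i => ?_⟩)
    have := h i.succ
    rwa [← Fin.succ_castSucc] at this

theorem exists_isMaxChain {n : ℕ} {a b : α} (h : CovSteps n a b) :
    ∃ c : Fin (n + 1) → α, IsMaxChainFromTo a b n c := by
  induction h with
  | refl a => exact ⟨fun _ => a, rfl, rfl, fun i => i.elim0⟩
  | @cons n a b c hab _ ih =>
    obtain ⟨f, h0, hl, hs⟩ := ih
    refine ⟨Fin.cons a f, rfl, ?_, fun i => ?_⟩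
    · rw [← Fin.succ_last, Fin.cons_succ, hl]
    · refine Fin.cases ?_ (fun j => ?_) i
      · simpa [h0] using hab
      · rw [← Fin.succ_castSucc, Fin.cons_succ, Fin.cons_succ]
        exact hs j

theorem isCatenarian_iff {a b : α} :
    IsCatenarianFromTo a b ↔ ∀ n m, CovSteps n a b → CovSteps m a b → n = m := by
  constructor
  · intro h n m hn hm
    obtain ⟨c, hc⟩ := hn.exists_isMaxChain
    obtain ⟨d, hd⟩ := hm.exists_isMaxChain
    exact h n m c d hc hd
  · intro h n m c d hc hd
    exact h n m (of_isMaxChain hc) (of_isMaxChain hd)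

theorem exists_of_le [WellFoundedLT α] [WellFoundedGT α] {a b : α} (h : a ≤ b) :
    ∃ n, CovSteps n a b := by
  induction a using WellFoundedGT.induction with
  | ind a ih =>
    rcases h.eq_or_lt with rfl | hlt
    · exact ⟨0, refl _⟩
    · obtain ⟨x, hx, hxb⟩ := exists_covBy_le_of_lt hlt
      obtain ⟨n, hn⟩ := ih x hx.lt hxb
      exact ⟨n + 1, cons hx hn⟩

/-- If every element is comparable with `t`, a maximal chain crossing `t` passes through `t`. -/
theorem split {t : α} (ht : ∀ u : α, u ≤ t ∨ t ≤ u) {n : ℕ} {a b : α} (h : CovSteps n a b) :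
    a ≤ t → t ≤ b → ∃ p q, n = p + q ∧ CovSteps p a t ∧ CovSteps q t b := by
  induction h with
  | refl a =>
    intro h1 h2
    obtain rfl := le_antisymm h1 h2
    exact ⟨0, 0, rfl, refl _, refl _⟩
  | @cons n a b c hab hbc ih =>
    intro h1 h2
    rcases h1.eq_or_lt with rfl | hlt
    · exact ⟨0, n + 1, by simp, refl _, cons hab hbc⟩
    · have hbt : b ≤ t := by
        rcases ht b with h | h
        · exact h
        · rcases h.eq_or_lt with rfl | h'
          · exact le_rfl
          · exact absurd h' (hab.2 hlt)
      obtain ⟨p, q, rfl, hp, hq⟩ := ih hbt h2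
      exact ⟨p + 1, q, by omega, cons hab hp, hq⟩

/-- The Jordan–Hölder theorem: in a modular lattice, maximal chains between two given elements
have the same length. -/
theorem unique_of_modular {β : Type*} [Lattice β] [IsModularLattice β] {a b : β} {n m : ℕ}
    (hn : CovSteps n a b) (hm : CovSteps m a b) : n = m := by
  obtain ⟨c, hc0, hcl, hc⟩ := hn.exists_isMaxChain
  obtain ⟨d, hd0, hdl, hd⟩ := hm.exists_isMaxChain
  let s₁ : CompositionSeries β := { length := n, toFun := c, step := hc }
  let s₂ : CompositionSeries β := { length := m, toFun := d, step := hd }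
  have hh : s₁.head = s₂.head := hc0.trans hd0.symm
  have hl : s₁.last = s₂.last := hcl.trans hdl.symm
  exact (CompositionSeries.jordan_holder s₁ s₂ hh hl).length_eq

end CovSteps

/-! ### Coverings in an integral extension with local top ring -/

namespace UnbranchedExt

open IsLocalRing

variable {R S : Type*} [CommRing R] [CommRing S] [Algebra R S]

theorem wellFoundedLT_of_FCP (h : IsFCPExt R S) : WellFoundedLT (Subalgebra R S) := by
  refine ⟨RelEmbedding.wellFounded_iff_isEmpty.2 ⟨fun f => ?_⟩⟩
  refine Set.infinite_range_of_injective f.injective (h _ ?_)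
  rintro _ ⟨i, rfl⟩ _ ⟨j, rfl⟩ hij
  rcases lt_trichotomy i j with hl | rfl | hl
  · exact Or.inr (f.map_rel_iff.2 hl).le
  · exact absurd rfl hij
  · exact Or.inl (f.map_rel_iff.2 hl).le

theorem wellFoundedGT_of_FCP (h : IsFCPExt R S) : WellFoundedGT (Subalgebra R S) := by
  refine ⟨RelEmbedding.wellFounded_iff_isEmpty.2 ⟨fun f => ?_⟩⟩
  refine Set.infinite_range_of_injective f.injective (h _ ?_)
  rintro _ ⟨i, rfl⟩ _ ⟨j, rfl⟩ hij
  rcases lt_trichotomy i j with hl | rfl | hl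
  · exact Or.inl (le_of_lt (f.map_rel_iff.2 hl))
  · exact absurd rfl hij
  · exact Or.inr (le_of_lt (f.map_rel_iff.2 hl))

/-- The subalgebra `A + N`, for an `A`-submodule `N` of `S` with `N * N ⊆ A + N`. -/
def addSub (A : Subalgebra R S) (N : Submodule A S)
    (h : ∀ x ∈ N, ∀ y ∈ N, ∃ a ∈ A, ∃ z ∈ N, x * y = a + z) : Subalgebra R S where
  carrier := {s | ∃ a ∈ A, ∃ z ∈ N, s = a + z}
  mul_mem' := by
    rintro _ _ ⟨a, ha, x, hx, rfl⟩ ⟨b, hb, y, hy, rfl⟩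
    obtain ⟨c, hc, z, hz, e⟩ := h x hx y hy
    refine ⟨a * b + c, add_mem (mul_mem ha hb) hc, a * y + b * x + z,
      add_mem (add_mem (N.smul_mem ⟨a, ha⟩ hy) (N.smul_mem ⟨b, hb⟩ hx)) hz, ?_⟩
    linear_combination e
  add_mem' := by
    rintro _ _ ⟨a, ha, x, hx, rfl⟩ ⟨b, hb, y, hy, rfl⟩
    exact ⟨a + b, add_mem ha hb, x + y, add_mem hx hy, by ring⟩
  algebraMap_mem' r := ⟨_, A.algebraMap_mem r, 0, N.zero_mem, by simp⟩

theorem mem_addSub {A : Subalgebra R S} {N : Submodule A S}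
    {h : ∀ x ∈ N, ∀ y ∈ N, ∃ a ∈ A, ∃ z ∈ N, x * y = a + z} {s : S} :
    s ∈ addSub A N h ↔ ∃ a ∈ A, ∃ z ∈ N, s = a + z := Iff.rfl

theorem le_addSub {A : Subalgebra R S} {N : Submodule A S}
    {h : ∀ x ∈ N, ∀ y ∈ N, ∃ a ∈ A, ∃ z ∈ N, x * y = a + z} : A ≤ addSub A N h :=
  fun a ha => ⟨a, ha, 0, N.zero_mem, by simp⟩

/-- The subalgebra `A + A x`, for `x` with `x ^ 2 ∈ A`. -/
def addSingle (A : Subalgebra R S) (x : S) (hx : x ^ 2 ∈ A) : Subalgebra R S :=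
  addSub A (Submodule.span A {x}) (by
    intro y hy z hz
    obtain ⟨⟨a, ha⟩, rfl⟩ := Submodule.mem_span_singleton.1 hy
    obtain ⟨⟨b, hb⟩, rfl⟩ := Submodule.mem_span_singleton.1 hz
    refine ⟨a * b * x ^ 2, mul_mem (mul_mem ha hb) hx, 0, Submodule.zero_mem _, ?_⟩
    simp only [Subalgebra.smul_def, smul_eq_mul]
    ring)

theorem mem_addSingle {A : Subalgebra R S} {x : S} {hx : x ^ 2 ∈ A} {s : S} :
    s ∈ addSingle A x hx ↔ ∃ a ∈ A, ∃ b ∈ A, s = a + b * x := by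
  rw [addSingle, mem_addSub]
  refine exists_congr fun a => and_congr_right fun _ => ?_
  simp only [Submodule.mem_span_singleton]
  constructor
  · rintro ⟨_, ⟨⟨b, hb⟩, rfl⟩, rfl⟩
    exact ⟨b, hb, rfl⟩
  · rintro ⟨b, hb, rfl⟩
    exact ⟨_, ⟨⟨b, hb⟩, rfl⟩, rfl⟩

theorem le_addSingle {A : Subalgebra R S} {x : S} {hx : x ^ 2 ∈ A} : A ≤ addSingle A x hx :=
  le_addSub

variable [IsLocalRing S]

theorem inv_mem (hint : Algebra.IsIntegral R S) (A : Subalgebra R S) {a : S} (ha : a ∈ A)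
    (hM : a ∉ maximalIdeal S) : ∃ b ∈ A, b * a = 1 := by
  have : Algebra.IsIntegral A S := Algebra.IsIntegral.tower_top R
  have hu : IsUnit (algebraMap A S ⟨a, ha⟩) := by simpa using hM
  obtain ⟨b, hb⟩ := (isUnit_of_map_unit (algebraMap A S) _ hu).exists_left_inv
  exact ⟨b, b.2, congrArg Subtype.val hb⟩

/-- For a covering `A ⋖ B`, the maximal ideal of `A` lies in the conductor of `A ⊆ B`.
Otherwise `A + (M ∩ A) B = B`, contradicting Nakayama's lemma. -/
theorem mul_mem_of_covBy (hint : Algebra.IsIntegral R S) {A B : Subalgebra R S} (h : A ⋖ B)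
    {m b : S} (hmA : m ∈ A) (hm : m ∈ maximalIdeal S) (hb : b ∈ B) : m * b ∈ A := by
  have : Algebra.IsIntegral A S := Algebra.IsIntegral.tower_top R
  obtain ⟨x, hxB, hxA⟩ := SetLike.exists_of_lt h.lt
  obtain ⟨D, hD⟩ : ∃ D : Subalgebra A S, D = Algebra.adjoin A {x} := ⟨_, rfl⟩
  have hxD : x ∈ D := hD ▸ Algebra.subset_adjoin (Set.mem_singleton x)
  let I : Ideal A := (maximalIdeal S).comap (algebraMap A S)
  have hDB : D.restrictScalars R = B := by
    refine ((h.eq_or_eq ?_ ?_).resolve_left ?_)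
    · intro a ha
      exact D.algebraMap_mem ⟨a, ha⟩
    · intro y hy
      rw [Subalgebra.mem_restrictScalars, hD] at hy
      induction hy using Algebra.adjoin_induction with
      | mem z hz => rw [Set.mem_singleton_iff.1 hz]; exact hxB
      | algebraMap a => exact h.le a.2
      | add _ _ _ _ h1 h2 => exact add_mem h1 h2
      | mul _ _ _ _ h1 h2 => exact mul_mem h1 h2
    · intro he
      apply hxA
      rw [← he]
      exact hxD
  let N : Submodule A S := I • Subalgebra.toSubmodule D
  have hND : N ≤ Subalgebra.toSubmodule D := Submodule.smul_le_right
  have hNN : ∀ y ∈ N, ∀ z ∈ N, y * z ∈ N := by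
    intro y hy z hz
    have hz' : z ∈ D := hND hz
    refine Submodule.smul_induction_on hy (fun r hr d hd => ?_) (fun u v hu hv => ?_)
    · rw [smul_mul_assoc]
      exact Submodule.smul_mem_smul hr (D.mul_mem hd hz')
    · rw [add_mul]; exact add_mem hu hv
  let C := addSub A N (fun y hy z hz => ⟨0, A.zero_mem, y * z, hNN y hy z hz, by simp⟩)
  have hCB : C ≤ B := by
    rintro _ ⟨a, ha, z, hz, rfl⟩
    refine add_mem (h.le ha) ?_
    rw [← hDB]
    exact hND hz
  have hCA : C = A := by
    refine (h.eq_or_eq le_addSub hCB).resolve_right fun he => hxA ?_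
    have hfg : (Subalgebra.toSubmodule D).FG :=
      hD ▸ IsIntegral.fg_adjoin_singleton (Algebra.IsIntegral.isIntegral x)
    have hI : I ≤ Ideal.jacobson ⊥ := by
      intro r hr
      rw [Ideal.mem_jacobson_bot]
      intro y
      refine isUnit_of_map_unit (algebraMap A S) _ ?_
      rw [map_add, map_one, map_mul]
      have h1 : algebraMap A S r * algebraMap A S y ∈ maximalIdeal S :=
        Ideal.mul_mem_right _ _ hr
      by_contra hcon
      have h2 := Ideal.sub_mem _ ((mem_maximalIdeal _).2 hcon) h1
      rw [add_sub_cancel_left] at h2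
      exact (Ideal.ne_top_iff_one _).1 (maximalIdeal.isMaximal S).ne_top h2
    have hle : Subalgebra.toSubmodule D ≤ Subalgebra.toSubmodule (⊥ : Subalgebra A S) := by
      refine Submodule.le_of_le_smul_of_le_jacobson_bot hfg hI ?_
      intro y hy
      have hyB : y ∈ B := by rw [← hDB]; exact hy
      rw [← he] at hyB
      obtain ⟨a, ha, z, hz, rfl⟩ := hyB
      exact Submodule.add_mem_sup ((⊥ : Subalgebra A S).algebraMap_mem ⟨a, ha⟩) hz
    have hx' : x ∈ (⊥ : Subalgebra A S) := hle hxD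
    obtain ⟨a, rfl⟩ := Algebra.mem_bot.1 hx'
    exact a.2
  rw [← hCA]
  refine ⟨0, A.zero_mem, m * b, ?_, by simp⟩
  rw [← hDB] at hb
  exact Submodule.smul_mem_smul (r := (⟨m, hmA⟩ : A)) (n := b) hm hb

/-- A covering `A ⋖ B` is either inert (`A` and `B` have the same maximal ideal) or ramified
(`B = A + A x` with `x` a non-unit and `x ^ 2 ∈ A`). -/
theorem inert_or_ramified (hint : Algebra.IsIntegral R S) {A B : Subalgebra R S} (h : A ⋖ B) :
    (∀ b ∈ B, b ∈ maximalIdeal S → b ∈ A) ∨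
      ∃ x ∈ B, x ∈ maximalIdeal S ∧ x ∉ A ∧ x ^ 2 ∈ A ∧
        ∀ b ∈ B, ∃ a ∈ A, ∃ a' ∈ A, b = a + a' * x := by
  refine or_iff_not_imp_left.2 fun hne => ?_
  push Not at hne
  obtain ⟨x, hxB, hxM, hxA⟩ := hne
  let N : Submodule A S :=
    { carrier := {s | ∃ b ∈ B, s = x ^ 2 * b}
      add_mem' := by
        rintro _ _ ⟨b, hb, rfl⟩ ⟨c, hc, rfl⟩
        exact ⟨b + c, add_mem hb hc, by ring⟩
      zero_mem' := ⟨0, B.zero_mem, by simp⟩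
      smul_mem' := by
        rintro ⟨a, ha⟩ _ ⟨b, hb, rfl⟩
        refine ⟨a * b, mul_mem (h.le ha) hb, ?_⟩
        simp only [Subalgebra.smul_def, smul_eq_mul]
        ring }
  have hNN : ∀ y ∈ N, ∀ z ∈ N, ∃ a ∈ A, ∃ w ∈ N, y * z = a + w := by
    rintro _ ⟨b, hb, rfl⟩ _ ⟨c, hc, rfl⟩
    exact ⟨0, A.zero_mem, _, ⟨b * (x ^ 2 * c), mul_mem hb (mul_mem (pow_mem hxB 2) hc), rfl⟩,
      by ring⟩
  have hCB : addSub A N hNN ≤ B := by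
    rintro _ ⟨a, ha, _, ⟨b, hb, rfl⟩, rfl⟩
    exact add_mem (h.le ha) (mul_mem (pow_mem hxB 2) hb)
  have hx2 : x ^ 2 ∈ A := by
    rcases h.eq_or_eq le_addSub hCB with he | he
    · rw [← he]
      exact ⟨0, A.zero_mem, x ^ 2, ⟨1, B.one_mem, by simp⟩, by simp⟩
    · -- `x = a + x ^ 2 * b` gives `x * (1 - x * b) = a`, where `1 - x * b` is a unit of `B`.
      exfalso
      have hx := hxB
      rw [← he] at hx
      obtain ⟨a, ha, _, ⟨b, hb, rfl⟩, e⟩ := hx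
      have haM : a ∈ maximalIdeal S := by
        have : a = x * (1 - x * b) := by linear_combination -e
        rw [this]
        exact Ideal.mul_mem_right _ _ hxM
      have hu : 1 - x * b ∉ maximalIdeal S := fun hu => by
        have h2 := Ideal.add_mem _ hu (Ideal.mul_mem_right b _ hxM)
        rw [sub_add_cancel] at h2
        exact (Ideal.ne_top_iff_one _).1 (maximalIdeal.isMaximal S).ne_top h2
      obtain ⟨c, hc, hc1⟩ := inv_mem hint B (sub_mem B.one_mem (mul_mem hxB hb)) hu
      have : x = a * c := by linear_combination -x * hc1 + c * e
      exact hxA (this ▸ mul_mem_of_covBy hint h ha haM hc)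
  refine ⟨x, hxB, hxM, hxA, hx2, fun b hb => ?_⟩
  have hE : addSingle A x hx2 = B := by
    refine (h.eq_or_eq le_addSingle ?_).resolve_left fun he => hxA ?_
    · intro s hs
      obtain ⟨a, ha, a', ha', rfl⟩ := mem_addSingle.1 hs
      exact add_mem (h.le ha) (mul_mem (h.le ha') hxB)
    · rw [← he]
      exact mem_addSingle.2 ⟨0, A.zero_mem, 1, A.one_mem, by simp⟩
  rw [← hE] at hb
  exact mem_addSingle.1 hb

theorem sq_mem_of_covBy (hint : Algebra.IsIntegral R S) {A B : Subalgebra R S} (h : A ⋖ B)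
    {b : S} (hb : b ∈ B) (hbM : b ∈ maximalIdeal S) : b ^ 2 ∈ A := by
  rcases inert_or_ramified hint h with hi | ⟨x, hxB, hxM, -, hx2, hx⟩
  · exact pow_mem (hi b hb hbM) 2
  · obtain ⟨a, ha, a', ha', rfl⟩ := hx b hb
    have haM : a ∈ maximalIdeal S := by
      have := Ideal.sub_mem _ hbM (Ideal.mul_mem_left _ a' hxM)
      rwa [add_sub_cancel_right] at this
    have h1 : a * (2 * (a' * x)) ∈ A := by
      refine mul_mem_of_covBy hint h ha haM (mul_mem ?_ (mul_mem (h.le ha') hxB))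
      exact ofNat_mem B 2
    have : (a + a' * x) ^ 2 = a ^ 2 + a * (2 * (a' * x)) + a' ^ 2 * x ^ 2 := by ring
    rw [this]
    exact add_mem (add_mem (pow_mem ha 2) h1) (mul_mem (pow_mem ha' 2) hx2)

/-! ### The t-closure is `R + M` -/

/-- Let `T` be t-closed with `M ∩ A ⊆ T`, where `S` is reached from `A` by finitely many coverings.
Then `M ⊆ T`: along a covering `A ⋖ B`, squares and cubes of elements of `M ∩ B` lie in `M ∩ A`,
so t-closedness (with `r = 0`) carries `M ∩ A ⊆ T` over to `B`. It is applied with `A = T`. -/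
theorem maximalIdeal_le_of_tClosed (hint : Algebra.IsIntegral R S) {A T : Subalgebra R S}
    (hT : IsTClosedIn T) {n : ℕ} (hc : CovSteps n A ⊤)
    (hA : ∀ b ∈ A, b ∈ maximalIdeal S → b ∈ T) : ∀ b ∈ maximalIdeal S, b ∈ T := by
  generalize hB : (⊤ : Subalgebra R S) = B at hc
  induction hc with
  | refl A => subst hB; exact fun b hb => hA b trivial hb
  | @cons n A B C hAB _ ih =>
    refine ih (fun b hb hbM => ?_) hB
    have h2 := sq_mem_of_covBy hint hAB hb hbM
    have h2M : b ^ 2 ∈ maximalIdeal S := Ideal.pow_mem_of_mem _ hbM 2 (by norm_num)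
    have h3M : b ^ 3 ∈ maximalIdeal S := Ideal.pow_mem_of_mem _ hbM 3 (by norm_num)
    have h3 : b ^ 3 ∈ A := by
      rw [pow_succ]
      exact mul_mem_of_covBy hint hAB h2 h2M hb
    exact hT b 0 T.zero_mem (by simpa using hA _ h2 h2M) (by simpa using hA _ h3 h3M)

/-- An infra-integral subalgebra `T` satisfies `T ⊆ R + M`. The residue field condition only gives
a fraction `r / s` congruent to `t`, but `s` is invertible in the image of `R`. -/
theorem exists_sub_mem_of_infraIntegral (hint : Algebra.IsIntegral R S) {T : Subalgebra R S}
    (hT : IsInfraIntegral R T) {t : S} (ht : t ∈ T) :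
    ∃ r : R, t - algebraMap R S r ∈ maximalIdeal S := by
  let Q : Ideal T := (maximalIdeal S).comap (algebraMap T S)
  have hQ : Q.IsPrime := Ideal.comap_isPrime _ _
  obtain ⟨z, hz⟩ := (hT.2 Q hQ).2 (residue _ (algebraMap T (Localization.AtPrime Q) ⟨t, ht⟩))
  obtain ⟨w, rfl⟩ := residue_surjective z
  obtain ⟨r, s, rfl⟩ := IsLocalization.exists_mk'_eq (Q.comap (algebraMap R T)).primeCompl w
  rw [ResidueField.map_residue, Localization.localRingHom_mk', ← sub_eq_zero, ← map_sub,
    residue_eq_zero_iff] at hz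
  have hs : algebraMap R T s ∉ Q := s.2
  have h1 := Ideal.mul_mem_left _
    (algebraMap T (Localization.AtPrime Q) (algebraMap R T s)) hz
  rw [mul_sub, ← map_mul] at h1
  erw [IsLocalization.mk'_spec' (M := Q.primeCompl) (Localization.AtPrime Q)] at h1
  rw [← map_sub, IsLocalization.AtPrime.to_map_mem_maximal_iff (Localization.AtPrime Q) Q] at h1
  have h2 : algebraMap R S r - algebraMap R S s * t ∈ maximalIdeal S := h1
  obtain ⟨c, hc, hc1⟩ := inv_mem hint (⊥ : Subalgebra R S)
    ((⊥ : Subalgebra R S).algebraMap_mem (s : R)) hs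
  obtain ⟨c, rfl⟩ := Algebra.mem_bot.1 hc
  refine ⟨c * r, ?_⟩
  have h3 := Ideal.mul_mem_left _ (-algebraMap R S c) h2
  convert h3 using 1
  rw [map_mul]
  linear_combination (-t) * hc1

section Comparison

variable {T : Subalgebra R S}

theorem mem_sup (hM : ∀ b ∈ maximalIdeal S, b ∈ T)
    (hR : ∀ t ∈ T, ∃ r : R, t - algebraMap R S r ∈ maximalIdeal S) {A : Subalgebra R S} {s : S} :
    s ∈ A ⊔ T ↔ ∃ a ∈ A, s - a ∈ maximalIdeal S := by
  constructor
  · let C := addSub A ((maximalIdeal S).restrictScalars A) (fun y hy z _ =>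
      ⟨0, A.zero_mem, y * z, Ideal.mul_mem_right z (maximalIdeal S) hy, by simp⟩)
    have hC : A ⊔ T ≤ C := by
      refine sup_le le_addSub fun t ht => ?_
      obtain ⟨r, hr⟩ := hR t ht
      exact ⟨_, A.algebraMap_mem r, _, hr, by ring⟩
    intro hs
    obtain ⟨a, ha, z, hz, rfl⟩ := hC hs
    refine ⟨a, ha, ?_⟩
    rw [add_sub_cancel_left]
    exact hz
  · rintro ⟨a, ha, hs⟩
    have h1 : a ∈ A ⊔ T := (le_sup_left : A ≤ A ⊔ T) ha
    have h2 : s - a ∈ A ⊔ T := (le_sup_right : T ≤ A ⊔ T) (hM _ hs)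
    simpa using add_mem h1 h2

/-- An inert covering does not change the intersection with `T`, and stays a covering after
taking the compositum with `T`. -/
theorem inert_step (hM : ∀ b ∈ maximalIdeal S, b ∈ T)
    (hR : ∀ t ∈ T, ∃ r : R, t - algebraMap R S r ∈ maximalIdeal S) {A B : Subalgebra R S}
    (h : A ⋖ B) (hi : ∀ b ∈ B, b ∈ maximalIdeal S → b ∈ A) :
    A ⊓ T = B ⊓ T ∧ A ⊔ T ⋖ B ⊔ T := by
  refine ⟨le_antisymm (inf_le_inf_right _ h.le) ?_, lt_of_le_of_ne (sup_le_sup_right h.le _) ?_,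
    fun C hC1 hC2 => ?_⟩
  · rintro b ⟨hbB, hbT⟩
    obtain ⟨r, hr⟩ := hR b hbT
    have h1 := hi _ (sub_mem hbB (B.algebraMap_mem r)) hr
    exact ⟨by simpa using add_mem h1 (A.algebraMap_mem r), hbT⟩
  · intro he
    refine h.lt.not_ge fun b hb => ?_
    have h1 : b ∈ A ⊔ T := he ▸ (le_sup_left : B ≤ B ⊔ T) hb
    obtain ⟨a, ha, h2⟩ := (mem_sup hM hR).1 h1
    simpa using add_mem (hi _ (sub_mem hb (h.le ha)) h2) ha
  · rcases h.eq_or_eq (c := C ⊓ B) (le_inf (le_sup_left.trans hC1.le) h.le) inf_le_right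
      with he | he
    · refine hC1.not_ge fun c hc => ?_
      obtain ⟨b, hb, h2⟩ := (mem_sup hM hR).1 (hC2.le hc)
      have hbC : b ∈ C := by
        have := sub_mem hc (hC1.le ((le_sup_right : T ≤ A ⊔ T) (hM _ h2)))
        rwa [sub_sub_cancel] at this
      have hbA : b ∈ A := he ▸ (⟨hbC, hb⟩ : b ∈ C ⊓ B)
      exact (mem_sup hM hR).2 ⟨b, hbA, h2⟩
    · exact hC2.not_ge (sup_le (inf_eq_right.1 he) (le_sup_right.trans hC1.le))

/-- A ramified covering `A ⋖ B` does not change the compositum with `T`, and strictly enlarges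
the intersection with `T`; if `A` is not contained in `T`, this enlargement takes at least two
coverings, an intermediate ring being `D + D x` with `D = A ∩ T`. -/
theorem ramified_step [WellFoundedLT (Subalgebra R S)] [WellFoundedGT (Subalgebra R S)]
    (hint : Algebra.IsIntegral R S) (hM : ∀ b ∈ maximalIdeal S, b ∈ T)
    (hR : ∀ t ∈ T, ∃ r : R, t - algebraMap R S r ∈ maximalIdeal S) {A B : Subalgebra R S}
    (h : A ⋖ B) {x : S} (hxB : x ∈ B) (hxM : x ∈ maximalIdeal S) (hxA : x ∉ A) (hx2 : x ^ 2 ∈ A)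
    (hx : ∀ b ∈ B, ∃ a ∈ A, ∃ a' ∈ A, b = a + a' * x) :
    A ⊔ T = B ⊔ T ∧ ∃ k, 1 ≤ k ∧ CovSteps k (A ⊓ T) (B ⊓ T) ∧ (¬ A ≤ T → 2 ≤ k) := by
  refine ⟨le_antisymm (sup_le_sup_right h.le _) (sup_le (fun b hb => ?_) le_sup_right), ?_⟩
  · obtain ⟨a, ha, a', ha', rfl⟩ := hx b hb
    refine (mem_sup hM hR).2 ⟨a, ha, ?_⟩
    rw [add_sub_cancel_left]
    exact Ideal.mul_mem_left _ _ hxM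
  have hlt : A ⊓ T < B ⊓ T := by
    refine lt_of_le_of_ne (inf_le_inf_right _ h.le) fun he => hxA ?_
    have : x ∈ B ⊓ T := ⟨hxB, hM x hxM⟩
    rw [← he] at this
    exact this.1
  obtain ⟨k, hk⟩ := CovSteps.exists_of_le hlt.le
  refine ⟨k, hk.one_le hlt.ne, hk, fun hAT => hk.two_le hlt.ne fun hc => ?_⟩
  obtain ⟨u, huA, huT⟩ := SetLike.not_le_iff_exists.1 hAT
  have hx2D : x ^ 2 ∈ A ⊓ T := ⟨hx2, pow_mem (hM x hxM) 2⟩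
  have hE : addSingle (A ⊓ T) x hx2D ≤ B ⊓ T := by
    intro s hs
    obtain ⟨a, ha, a', ha', rfl⟩ := mem_addSingle.1 hs
    exact add_mem (hlt.le ha) (mul_mem (hlt.le ha') ⟨hxB, hM x hxM⟩)
  rcases hc.eq_or_eq le_addSingle hE with he | he
  · have : x ∈ addSingle (A ⊓ T) x hx2D :=
      mem_addSingle.2 ⟨0, zero_mem _, 1, one_mem _, by simp⟩
    rw [he] at this
    exact hxA this.1
  · have hux : u * x ∈ B ⊓ T :=
      ⟨mul_mem (h.le huA) hxB, hM _ (Ideal.mul_mem_left _ _ hxM)⟩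
    rw [← he] at hux
    obtain ⟨d, hd, d', hd', e⟩ := mem_addSingle.1 hux
    have hu : u - d' ∉ maximalIdeal S := fun hu =>
      huT (by simpa using add_mem (hM _ hu) hd'.2)
    obtain ⟨c, hc, hc1⟩ := inv_mem hint A (sub_mem huA hd'.1) hu
    have : x = c * d := by linear_combination -x * hc1 + c * e
    exact hxA (this ▸ mul_mem hc hd.1)

/-- Comparison of a maximal chain from `A` to `B` with the chains it induces from `A ∩ T` to
`B ∩ T` and from `A T` to `B T`. The number `q` counts the inert steps and `p` the ramified ones;
a ramified step starting outside of `T` makes `p ≤ p'` strict, and there is one when `A` is not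
contained in `T` and `A ∩ T ≠ B ∩ T`. -/
theorem compare_chain [WellFoundedLT (Subalgebra R S)] [WellFoundedGT (Subalgebra R S)]
    (hint : Algebra.IsIntegral R S) (hM : ∀ b ∈ maximalIdeal S, b ∈ T)
    (hR : ∀ t ∈ T, ∃ r : R, t - algebraMap R S r ∈ maximalIdeal S) {A B : Subalgebra R S} {n : ℕ}
    (h : CovSteps n A B) :
    ∃ p p' q, n = p + q ∧ p ≤ p' ∧ CovSteps p' (A ⊓ T) (B ⊓ T) ∧ CovSteps q (A ⊔ T) (B ⊔ T) ∧
      (¬ A ≤ T → A ⊓ T ≠ B ⊓ T → p < p') := by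
  induction h with
  | refl A => exact ⟨0, 0, 0, rfl, le_rfl, .refl _, .refl _, fun _ h => absurd rfl h⟩
  | @cons n A B C hAB _ ih =>
    obtain ⟨p, p', q, rfl, hp, hp', hq, hs⟩ := ih
    rcases inert_or_ramified hint hAB with hi | ⟨x, hxB, hxM, hxA, hx2, hx⟩
    · obtain ⟨h1, h2⟩ := inert_step hM hR hAB hi
      rw [h1]
      exact ⟨p, p', q + 1, by omega, hp, hp', .cons h2 hq,
        fun hA hne => hs (fun hB => hA (hAB.le.trans hB)) hne⟩
    · obtain ⟨h1, k, hk1, hk, hk2⟩ := ramified_step hint hM hR hAB hxB hxM hxA hx2 hx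
      rw [h1]
      refine ⟨p + 1, k + p', q, by omega, by omega, hk.append hp', hq, fun hA _ => ?_⟩
      have := hk2 hA
      omega

/-- Below `T`, a covering of subalgebras is a covering of `R`-submodules. -/
theorem toSubmodule_covBy (hint : Algebra.IsIntegral R S)
    (hR : ∀ t ∈ T, ∃ r : R, t - algebraMap R S r ∈ maximalIdeal S) {A B : Subalgebra R S}
    (h : A ⋖ B) (hBT : B ≤ T) : Subalgebra.toSubmodule A ⋖ Subalgebra.toSubmodule B := by
  refine ⟨Subalgebra.toSubmodule.lt_iff_lt.2 h.lt, fun N hN1 hN2 => ?_⟩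
  rcases inert_or_ramified hint h with hi | ⟨x, hxB, hxM, hxA, hx2, hx⟩
  · refine h.lt.not_ge fun b hb => ?_
    obtain ⟨r, hr⟩ := hR b (hBT hb)
    simpa using add_mem (hi _ (sub_mem hb (B.algebraMap_mem r)) hr) (A.algebraMap_mem r)
  · -- Every element of `B` is of the form `a + r x` with `a ∈ A` and `r ∈ R`.
    have hx' : ∀ b ∈ B, ∃ a ∈ A, ∃ r : R, b = a + algebraMap R S r * x := by
      intro b hb
      obtain ⟨a, ha, a', ha', rfl⟩ := hx b hb
      obtain ⟨r, hr⟩ := hR a' (hBT (h.le ha'))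
      exact ⟨a + (a' - algebraMap R S r) * x,
        add_mem ha (mul_mem_of_covBy hint h (sub_mem ha' (A.algebraMap_mem r)) hr hxB), r, by ring⟩
    obtain ⟨y, hyN, hyA⟩ := SetLike.exists_of_lt hN1
    obtain ⟨a, ha, r, rfl⟩ := hx' y (hN2.le hyN)
    have hr : algebraMap R S r ∉ maximalIdeal S := fun hr =>
      hyA (add_mem ha (mul_mem_of_covBy hint h (A.algebraMap_mem r) hr hxB))
    obtain ⟨c, hc, hc1⟩ := inv_mem hint (⊥ : Subalgebra R S)
      ((⊥ : Subalgebra R S).algebraMap_mem r) hr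
    obtain ⟨c, rfl⟩ := Algebra.mem_bot.1 hc
    have hxN : x ∈ N := by
      have h1 := N.smul_mem c (N.sub_mem hyN (hN1.le ha))
      convert h1 using 1
      rw [Algebra.smul_def]
      linear_combination -x * hc1
    refine hN2.not_ge fun b hb => ?_
    obtain ⟨a, ha, s, rfl⟩ := hx' b hb
    refine N.add_mem (hN1.le ha) ?_
    rw [← Algebra.smul_def]
    exact N.smul_mem s hxN

theorem toSubmodule_covSteps (hint : Algebra.IsIntegral R S)
    (hR : ∀ t ∈ T, ∃ r : R, t - algebraMap R S r ∈ maximalIdeal S) {A B : Subalgebra R S} {n : ℕ}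
    (h : CovSteps n A B) (hBT : B ≤ T) :
    CovSteps n (Subalgebra.toSubmodule A) (Subalgebra.toSubmodule B) := by
  induction h with
  | refl => exact .refl _
  | cons hab hbc ih => exact .cons (toSubmodule_covBy hint hR hab (hbc.le.trans hBT)) (ih hBT)

end Comparison

end UnbranchedExt

/-- Let `R ⊆ S` be an integral FCP extension with `S` local
(`R` unbranched in `S`) and t-closure `T`. Then `R ⊆ S` is catenarian iff
`[R,S] = [R,T] ∪ [T,S]` and `T ⊆ S` is catenarian. -/
theorem stmt_17 {R S : Type*} [CommRing R] [CommRing S] [Algebra R S]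
    [IsLocalRing S]
    (hinj : Function.Injective (algebraMap R S)) (hFCP : IsFCPExt R S)
    (hint : Algebra.IsIntegral R S)
    (T : Subalgebra R S) (hT : IsTClosure T) :
    IsCatenarianExt R S ↔
      (∀ U : Subalgebra R S, U ≤ T ∨ T ≤ U) ∧
        IsCatenarianFromTo T (⊤ : Subalgebra R S) := by
  have : WellFoundedLT (Subalgebra R S) := UnbranchedExt.wellFoundedLT_of_FCP hFCP
  have : WellFoundedGT (Subalgebra R S) := UnbranchedExt.wellFoundedGT_of_FCP hFCP
  obtain ⟨k, hk⟩ := CovSteps.exists_of_le (le_top : T ≤ ⊤)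
  obtain ⟨j, hj⟩ := CovSteps.exists_of_le (bot_le : ⊥ ≤ T)
  have hM := UnbranchedExt.maximalIdeal_le_of_tClosed hint hT.2 hk (fun _ hb _ => hb)
  have hR : ∀ t ∈ T, ∃ r : R, t - algebraMap R S r ∈ IsLocalRing.maximalIdeal S :=
    fun t ht => UnbranchedExt.exists_sub_mem_of_infraIntegral hint hT.1 ht
  rw [IsCatenarianExt, CovSteps.isCatenarian_iff, CovSteps.isCatenarian_iff]
  constructor
  · intro hcat
    refine ⟨fun U => ?_, fun n m hn hm => ?_⟩
    · -- Otherwise a maximal chain through `U` is shorter than one through `U ⊓ T`, `T`, `U ⊔ T`.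
      by_contra! hU
      obtain ⟨a, ha⟩ := CovSteps.exists_of_le (bot_le : ⊥ ≤ U)
      obtain ⟨b, hb⟩ := CovSteps.exists_of_le (le_top : U ≤ ⊤)
      obtain ⟨p₁, p₁', q₁, e₁, hp₁, hl₁, hr₁, -⟩ := UnbranchedExt.compare_chain hint hM hR ha
      obtain ⟨p₂, p₂', q₂, e₂, hp₂, hl₂, hr₂, hs⟩ := UnbranchedExt.compare_chain hint hM hR hb
      rw [bot_inf_eq] at hl₁
      rw [bot_sup_eq] at hr₁
      rw [top_inf_eq] at hl₂ hs
      rw [top_sup_eq] at hr₂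
      have h1 := hs hU.1 (fun he => hU.2 (inf_eq_right.1 he))
      have h2 := hcat _ _ (ha.append hb) ((hl₁.append hl₂).append (hr₁.append hr₂))
      omega
    · have := hcat _ _ (hj.append hn) (hj.append hm)
      omega
  · rintro ⟨hcomp, hcat⟩ n m hn hm
    obtain ⟨p, q, rfl, hp, hq⟩ := hn.split hcomp bot_le le_top
    obtain ⟨p', q', rfl, hp', hq'⟩ := hm.split hcomp bot_le le_top
    have h1 := CovSteps.unique_of_modular
      (UnbranchedExt.toSubmodule_covSteps hint hR hp le_rfl)
      (UnbranchedExt.toSubmodule_covSteps hint hR hp' le_rfl)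
    have h2 := hcat _ _ hq hq'
    omega
end
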